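/- arXiv:1304.7062 — 6 statements merged into one kernel-verified Lean document; each statement's English description precedes it below -/
import Mathlib

section
/- Let n ≥ 2 and let 0 ≤ l < k ≤ n be integers. The function F(λ) = (σ_k(λ)/σ_l(λ))^{1/(k−l)} is concave on the Garding cone Γ_k: for all λ, μ ∈ Γ_k and all t ∈ [0,1] such that tλ + (1−t)μ ∈ Γ_k, one has F(tλ + (1−t)μ) ≥ t·F(λ) + (1−t)·F(μ). -/
/-!
The function `F` is a geometric mean: `σ_k / σ_l = ∏_{l ≤ m < k} σ_{m+1} / σ_m`, and a geometric
mean of positive concave functions is concave (by AM-GM, `geom_mean_superadditive`). So it suffices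
that each `q_m = σ_{m+1} / σ_m`, which is homogeneous of degree one, is superadditive on `Γ_m`;
this is `superadditive`, proved by the induction of Marcus and Lopes. The induction rests on

  `(m + 2) q_{m+1}(x) = ∑ i, (x_i - x_i² / (x_i + q_m(x|i)))`,

where `x|i` is `x` with the `i`-th entry deleted, together with the joint convexity of `a² / d` and
its monotonicity in `d > 0`. That the deleted vectors stay in the right cone (`x ∈ Γ_{m+1}` implies
`x|i ∈ Γ_m`, lemma `sig_erase_pos`) is a consequence of Newton's inequality
`σ_m σ_{m+2} ≤ σ_{m+1}²`, valid for all real vectors. Newton's inequality in turn follows from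
Laguerre's inequality `p p'' ≤ p'²` for real-rooted `p`, applied to the successive derivatives of
the generating polynomial `∏ (1 + x_i X)`, which are real-rooted by Rolle's theorem.
-/

open Finset

/-- The `m`-th elementary symmetric polynomial of the entries of `x` indexed by `A`,
with the convention that it vanishes for negative `m` (and for `m` larger than `A.card`). -/
noncomputable def esymmOn {n : ℕ} (A : Finset (Fin n)) (m : ℤ) (x : Fin n → ℝ) : ℝ :=
  if 0 ≤ m then ∑ s ∈ Finset.powersetCard m.toNat A, ∏ i ∈ s, x i else 0

/-- `esym m x` is σ_m(x), the `m`-th elementary symmetric polynomial of `x`. -/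
noncomputable def esym {n : ℕ} (m : ℤ) (x : Fin n → ℝ) : ℝ := esymmOn Finset.univ m x

/-- `esymD1 m x i` is σ_m(x|i), the `m`-th elementary symmetric polynomial of the
entries of `x` with the `i`-th entry deleted. -/
noncomputable def esymD1 {n : ℕ} (m : ℤ) (x : Fin n → ℝ) (i : Fin n) : ℝ :=
  esymmOn (Finset.univ.erase i) m x

/-- `esymD2 m x i j` is σ_m(x|ij), the `m`-th elementary symmetric polynomial of the
entries of `x` with the `i`-th and `j`-th entries deleted. -/
noncomputable def esymD2 {n : ℕ} (m : ℤ) (x : Fin n → ℝ) (i j : Fin n) : ℝ :=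
  esymmOn ((Finset.univ.erase i).erase j) m x

/-- The Garding cone Γ_k. -/
def GardingCone (n k : ℕ) : Set (Fin n → ℝ) :=
  {x | ∀ m : ℕ, 1 ≤ m → m ≤ k → 0 < esym (m : ℤ) x}

/-- `(σ_m)_ξ(x)`, the derivative of σ_m at `x` in the diagonal direction `ξ`. -/
noncomputable def esymDeriv {n : ℕ} (m : ℤ) (x ξ : Fin n → ℝ) : ℝ :=
  ∑ p, esymD1 (m - 1) x p * ξ p

/-- The divided difference `g(s,t)` of the exponential function. -/
noncomputable def expDD (s t : ℝ) : ℝ :=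
  if s = t then Real.exp t else (Real.exp s - Real.exp t) / (s - t)

open Polynomial

/-! ### Newton's inequality for real-rooted polynomials -/

/-- Laguerre's inequality. -/
lemma laguerre {p : ℝ[X]} (hp : p.Splits) (x : ℝ) :
    p.eval x * (derivative (derivative p)).eval x ≤ ((derivative p).eval x) ^ 2 := by
  obtain ⟨s, hs⟩ := splits_iff_exists_multiset.1 hp
  rw [hs]
  generalize p.leadingCoeff = c
  clear hs hp
  induction s using Multiset.induction_on with
  | empty => simp
  | cons a s ih =>
    rw [Multiset.map_cons, Multiset.prod_cons, mul_left_comm]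
    generalize C c * (Multiset.map (fun a => X - C a) s).prod = q at ih ⊢
    simp only [derivative_mul, derivative_sub, derivative_X, derivative_C, derivative_add,
      eval_mul, eval_add, eval_sub, eval_X, eval_C, sub_zero, one_mul]
    nlinarith [mul_nonneg (sq_nonneg (x - a)) (sub_nonneg.2 ih), sq_nonneg (eval x q)]

lemma splits_derivative {p : ℝ[X]} (hp : p.Splits) : (derivative p).Splits := by
  by_cases h0 : p.natDegree = 0
  · rw [natDegree_eq_zero] at h0
    obtain ⟨c, rfl⟩ := h0
    simp
  rw [splits_iff_card_roots] at hp ⊢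
  have h1 := card_roots_le_derivative p
  have h2 := (derivative p).card_roots'
  have h3 := natDegree_derivative_lt h0
  omega

lemma newton_splits (j : ℕ) : ∀ {p : ℝ[X]}, p.Splits →
    ((j : ℝ) + 2) * (p.coeff j * p.coeff (j + 2)) ≤ (j + 1) * p.coeff (j + 1) ^ 2 := by
  induction j with
  | zero =>
    intro p hp
    have h := laguerre hp 0
    simp only [← coeff_zero_eq_eval_zero, coeff_derivative] at h
    norm_num at h ⊢
    linarith
  | succ j ih =>
    intro p hp
    have h := ih (splits_derivative hp)
    simp only [coeff_derivative] at h
    push_cast at h ⊢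
    have hpos : (0 : ℝ) < (j + 1) * (j + 2) := by positivity
    refine le_of_mul_le_mul_left ?_ hpos
    rw [show j + 1 + 2 = j + 2 + 1 by ring, show j + 1 + 1 = j + 2 by ring] at *
    linarith

/-! ### Elementary symmetric polynomials through their generating polynomial -/

section sig

variable {ι : Type*}

/-- The generating polynomial `∏_{i ∈ A} (1 + x_i X)` of the elementary symmetric polynomials. -/
noncomputable def genPoly (A : Finset ι) (x : ι → ℝ) : ℝ[X] := ∏ i ∈ A, (1 + C (x i) * X)

/-- The `m`-th elementary symmetric polynomial of the entries of `x` indexed by `A`, as a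
coefficient of `genPoly`. -/
noncomputable def sig (A : Finset ι) (m : ℕ) (x : ι → ℝ) : ℝ := (genPoly A x).coeff m

lemma sig_eq_sum (A : Finset ι) (m : ℕ) (x : ι → ℝ) :
    sig A m x = ∑ s ∈ Finset.powersetCard m A, ∏ i ∈ s, x i := by
  unfold sig genPoly
  rw [Finset.prod_one_add, finsetSum_coeff, Finset.powersetCard_eq_filter,
    Finset.sum_filter]
  refine Finset.sum_congr rfl fun s _ => ?_
  rw [Finset.prod_mul_distrib, Finset.prod_const, ← map_prod, coeff_C_mul, coeff_X_pow]
  simp [eq_comm]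

lemma sig_zero (A : Finset ι) (x : ι → ℝ) : sig A 0 x = 1 := by simp [sig_eq_sum]

lemma sig_smul (A : Finset ι) (m : ℕ) (t : ℝ) (x : ι → ℝ) :
    sig A m (fun i => t * x i) = t ^ m * sig A m x := by
  simp only [sig_eq_sum, Finset.mul_sum]
  refine Finset.sum_congr rfl fun s hs => ?_
  rw [Finset.prod_mul_distrib, Finset.prod_const, (Finset.mem_powersetCard.1 hs).2]

lemma sig_succ [DecidableEq ι] {A : Finset ι} {i : ι} (hi : i ∈ A) (m : ℕ) (x : ι → ℝ) :
    sig A (m + 1) x = sig (A.erase i) (m + 1) x + x i * sig (A.erase i) m x := by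
  unfold sig genPoly
  rw [← Finset.mul_prod_erase A _ hi, add_mul, one_mul, coeff_add, mul_assoc, coeff_C_mul,
    coeff_X_mul]

/-- Compare coefficients in the derivative of `genPoly`. -/
lemma succ_mul_sig [DecidableEq ι] (A : Finset ι) (m : ℕ) (x : ι → ℝ) :
    ((m : ℝ) + 1) * sig A (m + 1) x = ∑ i ∈ A, x i * sig (A.erase i) m x := by
  have h : (derivative (genPoly A x)).coeff m = ∑ i ∈ A, x i * sig (A.erase i) m x := by
    unfold genPoly
    rw [derivative_prod_finset, finsetSum_coeff]
    refine Finset.sum_congr rfl fun i _ => ?_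
    rw [derivative_add, derivative_one, zero_add, derivative_C_mul, derivative_X, mul_one,
      coeff_mul_C, mul_comm, sig, genPoly]
  rw [← h, coeff_derivative, mul_comm, sig]

lemma sig_newton (A : Finset ι) (m : ℕ) (x : ι → ℝ) :
    sig A m x * sig A (m + 2) x ≤ sig A (m + 1) x ^ 2 := by
  have hs : (genPoly A x).Splits := by
    refine Splits.prod fun i _ => Splits.of_natDegree_le_one ?_
    compute_degree
  have h := newton_splits m hs
  change ((m : ℝ) + 2) * (sig A m x * sig A (m + 2) x) ≤ (m + 1) * sig A (m + 1) x ^ 2 at h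
  have hm : (0 : ℝ) < (m : ℝ) + 2 := by positivity
  refine le_of_mul_le_mul_left ?_ hm
  nlinarith [sq_nonneg (sig A (m + 1) x)]

/-! ### Superadditivity of the consecutive quotients -/

/-- Deleting an entry maps `Γ_{m+1}` into `Γ_m`. -/
lemma sig_erase_pos [DecidableEq ι] {A : Finset ι} {i : ι} (hi : i ∈ A) {x : ι → ℝ} (m : ℕ)
    (h : ∀ j ≤ m + 1, 0 < sig A j x) : ∀ j ≤ m, 0 < sig (A.erase i) j x := by
  intro j
  induction j with
  | zero => intro _; simp [sig_zero]
  | succ j ih =>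
    intro hj
    have h0 := ih (by omega)
    by_contra hneg
    push Not at hneg
    have h1 := h (j + 1) (by omega)
    have h2 := h (j + 2) (by omega)
    rw [sig_succ hi] at h1 h2
    -- If `σ_{j+1}(x|i) ≤ 0 < σ_j(x|i)`, positivity of `σ_{j+1}(x)` and `σ_{j+2}(x)` forces
    -- `σ_j(x|i) σ_{j+2}(x|i) > σ_{j+1}(x|i)²`.
    have hN := sig_newton (A.erase i) j x
    have e1 := mul_pos h0 h2
    have e2 := mul_nonneg (neg_nonneg.2 hneg) h1.le
    nlinarith

lemma sq_div_add_le {a b D E G : ℝ} (hD : 0 < D) (hE : 0 < E) (hG : D + E ≤ G) :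
    (a + b) ^ 2 / G ≤ a ^ 2 / D + b ^ 2 / E := by
  have h1 : (a + b) ^ 2 / G ≤ (a + b) ^ 2 / (D + E) :=
    div_le_div_of_nonneg_left (sq_nonneg _) (by positivity) hG
  refine h1.trans ?_
  rw [div_add_div _ _ hD.ne' hE.ne', div_le_div_iff₀ (by positivity) (by positivity)]
  have : 0 ≤ (a * E - b * D) ^ 2 := sq_nonneg _
  nlinarith

/-- Each summand of the Marcus–Lopes formula, with the denominator `σ_{m+1}(x) / σ_m(x|i)` equal to
`x_i + q_m(x|i)`. -/
lemma summand_eq [DecidableEq ι] {A : Finset ι} {i : ι} (hi : i ∈ A) {x : ι → ℝ} {m : ℕ}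
    (h : 0 < sig A (m + 1) x) (h' : 0 < sig (A.erase i) m x) :
    0 < x i + sig (A.erase i) (m + 1) x / sig (A.erase i) m x ∧
    x i * sig (A.erase i) (m + 1) x / sig A (m + 1) x =
      x i - x i ^ 2 / (x i + sig (A.erase i) (m + 1) x / sig (A.erase i) m x) := by
  have e : x i + sig (A.erase i) (m + 1) x / sig (A.erase i) m x
      = sig A (m + 1) x / sig (A.erase i) m x := by
    rw [sig_succ hi]; field_simp; ring
  rw [e]
  refine ⟨by positivity, ?_⟩
  have hs := sig_succ hi m x
  field_simp
  linear_combination (-x i) * hs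

/-- The Marcus–Lopes inequality on the Garding cone `Γ_m`, together with the closure of `Γ_m` under
addition. -/
lemma superadditive [DecidableEq ι] (m : ℕ) : ∀ (A : Finset ι) (x y : ι → ℝ),
    (∀ j ≤ m, 0 < sig A j x) → (∀ j ≤ m, 0 < sig A j y) →
    (∀ j ≤ m, 0 < sig A j (x + y)) ∧
    sig A (m + 1) x / sig A m x + sig A (m + 1) y / sig A m y
      ≤ sig A (m + 1) (x + y) / sig A m (x + y) := by
  induction m with
  | zero =>
    intro A x y _ _
    refine ⟨fun j hj => ?_, ?_⟩
    · obtain rfl : j = 0 := by omega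
      simp [sig_zero]
    · have h (z : ι → ℝ) : sig A (0 + 1) z = ∑ i ∈ A, z i := by
        simpa [sig_zero] using succ_mul_sig A 0 z
      simp only [h, sig_zero, div_one, Pi.add_apply, Finset.sum_add_distrib, le_refl]
  | succ m ih =>
    intro A x y hx hy
    obtain ⟨hpos, hq⟩ := ih A x y (fun j hj => hx j (by omega)) (fun j hj => hy j (by omega))
    have hpos' : ∀ j ≤ m + 1, 0 < sig A j (x + y) := by
      intro j hj
      rcases Nat.lt_or_ge j (m + 1) with h | h
      · exact hpos j (by omega)
      obtain rfl : j = m + 1 := by omega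
      have h1 := div_pos (hx (m + 1) le_rfl) (hx m (by omega))
      have h2 := div_pos (hy (m + 1) le_rfl) (hy m (by omega))
      exact (div_pos_iff_of_pos_right (hpos m le_rfl)).1 (by linarith)
    refine ⟨hpos', ?_⟩
    have key (z : ι → ℝ) : ((m : ℝ) + 2) * (sig A (m + 1 + 1) z / sig A (m + 1) z)
        = ∑ i ∈ A, z i * sig (A.erase i) (m + 1) z / sig A (m + 1) z := by
      have := succ_mul_sig A (m + 1) z
      rw [← Finset.sum_div, ← this]
      push_cast
      ring
    have hm : (0 : ℝ) < (m : ℝ) + 2 := by positivity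
    refine le_of_mul_le_mul_left ?_ hm
    rw [mul_add, key, key, key, ← Finset.sum_add_distrib]
    refine Finset.sum_le_sum fun i hi => ?_
    have ex := sig_erase_pos hi m hx
    have ey := sig_erase_pos hi m hy
    obtain ⟨es, er⟩ := ih (A.erase i) x y ex ey
    obtain ⟨dx, fx⟩ := summand_eq hi (hx _ le_rfl) (ex _ le_rfl)
    obtain ⟨dy, fy⟩ := summand_eq hi (hy _ le_rfl) (ey _ le_rfl)
    obtain ⟨-, fs⟩ := summand_eq hi (hpos' _ le_rfl) (es _ le_rfl)
    rw [fx, fy, fs, Pi.add_apply]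
    have := sq_div_add_le (a := x i) (b := y i) (G := x i + y i +
      sig (A.erase i) (m + 1) (x + y) / sig (A.erase i) m (x + y)) dx dy (by linarith)
    linarith

end sig

/-! ### Geometric means -/

lemma geom_mean_superadditive {ι : Type*} (s : Finset ι) (hs : s.Nonempty) (u v w : ι → ℝ)
    (hu : ∀ i ∈ s, 0 < u i) (hv : ∀ i ∈ s, 0 < v i) (hw : ∀ i ∈ s, u i + v i ≤ w i) :
    (∏ i ∈ s, u i) ^ ((1 : ℝ) / s.card) + (∏ i ∈ s, v i) ^ ((1 : ℝ) / s.card)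
      ≤ (∏ i ∈ s, w i) ^ ((1 : ℝ) / s.card) := by
  have hc : (0 : ℝ) < s.card := by exact_mod_cast hs.card_pos
  have hwpos : ∀ i ∈ s, 0 < w i := fun i hi => by linarith [hu i hi, hv i hi, hw i hi]
  have hW : 0 < ∏ i ∈ s, w i := Finset.prod_pos hwpos
  -- AM-GM for the ratios `z i / w i`
  have amgm (z : ι → ℝ) (hz : ∀ i ∈ s, 0 < z i) :
      (∏ i ∈ s, z i) ^ ((1 : ℝ) / s.card) / (∏ i ∈ s, w i) ^ ((1 : ℝ) / s.card)
        ≤ ∑ i ∈ s, (1 : ℝ) / s.card * (z i / w i) := by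
    have hnn : ∀ i ∈ s, 0 ≤ z i / w i := fun i hi => (div_pos (hz i hi) (hwpos i hi)).le
    have h := Real.geom_mean_le_arith_mean_weighted s (fun _ => (1 : ℝ) / s.card)
      (fun i => z i / w i) (fun _ _ => by positivity)
      (by rw [Finset.sum_const, nsmul_eq_mul]; field_simp) hnn
    rwa [Real.finsetProd_rpow _ _ hnn, Finset.prod_div_distrib,
      Real.div_rpow (Finset.prod_nonneg fun i hi => (hz i hi).le) hW.le] at h
  have h1 := add_le_add (amgm u hu) (amgm v hv)
  have h2 : ∑ i ∈ s, (1 : ℝ) / s.card * (u i / w i) + ∑ i ∈ s, (1 : ℝ) / s.card * (v i / w i)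
      ≤ 1 := by
    rw [← Finset.sum_add_distrib]
    calc _ ≤ ∑ i ∈ s, (1 : ℝ) / s.card := by
          refine Finset.sum_le_sum fun i hi => ?_
          rw [← mul_add, ← add_div]
          exact mul_le_of_le_one_right (by positivity) ((div_le_one (hwpos i hi)).2 (hw i hi))
      _ = 1 := by rw [Finset.sum_const, nsmul_eq_mul]; field_simp
  rw [← add_div] at h1
  exact (div_le_one (Real.rpow_pos_of_pos hW _)).1 (h1.trans h2)

lemma esym_eq_sig {n : ℕ} (m : ℕ) (x : Fin n → ℝ) : esym (m : ℤ) x = sig Finset.univ m x := by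
  simp [esym, esymmOn, sig_eq_sum]

lemma prod_quotients {n k l : ℕ} (hlk : l ≤ k) (x : Fin n → ℝ)
    (h : ∀ j ≤ k, 0 < sig Finset.univ j x) :
    ∏ m ∈ Finset.Ico l k, sig Finset.univ (m + 1) x / sig Finset.univ m x
      = sig Finset.univ k x / sig Finset.univ l x := by
  induction k, hlk using Nat.le_induction with
  | base => simp [(h l le_rfl).ne']
  | succ k hk ih =>
    rw [Finset.prod_Ico_succ_top hk, ih fun j hj => h j (by omega)]
    have := h k (by omega)
    have := h l (by omega)
    field_simp

/-- Concavity of `F = (σ_k/σ_l)^{1/(k-l)}` on the Garding cone `Γ_k`. -/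
theorem quotient_root_concave (n k l : ℕ) (hn : 2 ≤ n) (hlk : l < k) (hkn : k ≤ n)
    (lam mu : Fin n → ℝ) (hlam : lam ∈ GardingCone n k) (hmu : mu ∈ GardingCone n k)
    (t : ℝ) (ht0 : 0 ≤ t) (ht1 : t ≤ 1)
    (hmid : (fun i => t * lam i + (1 - t) * mu i) ∈ GardingCone n k) :
    t * (esym (k : ℤ) lam / esym (l : ℤ) lam) ^ ((1 : ℝ) / ((k : ℝ) - (l : ℝ)))
        + (1 - t) * (esym (k : ℤ) mu / esym (l : ℤ) mu) ^ ((1 : ℝ) / ((k : ℝ) - (l : ℝ)))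
      ≤ (esym (k : ℤ) (fun i => t * lam i + (1 - t) * mu i)
          / esym (l : ℤ) (fun i => t * lam i + (1 - t) * mu i))
            ^ ((1 : ℝ) / ((k : ℝ) - (l : ℝ))) := by
  rcases ht0.eq_or_lt with rfl | ht0
  · simp
  rcases ht1.eq_or_lt with rfl | ht1
  · simp
  have cone {x : Fin n → ℝ} (hx : x ∈ GardingCone n k) : ∀ j ≤ k, 0 < sig Finset.univ j x := by
    intro j hj
    rcases Nat.eq_zero_or_pos j with rfl | h0
    · simp [sig_zero]
    · rw [← esym_eq_sig]; exact hx j h0 hj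
  have hx := cone hlam
  have hy := cone hmu
  have hz := cone hmid
  simp only [esym_eq_sig]
  have hcard : (k : ℝ) - l = ((Finset.Ico l k).card : ℝ) := by
    rw [Nat.card_Ico, Nat.cast_sub hlk.le]
  have hc0 : ((Finset.Ico l k).card : ℝ) ≠ 0 := by
    rw [← hcard, sub_ne_zero]; exact_mod_cast hlk.ne'
  rw [← prod_quotients hlk.le _ hx, ← prod_quotients hlk.le _ hy, ← prod_quotients hlk.le _ hz,
    hcard]
  -- homogeneity of `F`: the weight `a` can be moved into every factor of the product
  have scale (a : ℝ) (ha : 0 < a) (x : Fin n → ℝ) (hx : ∀ j ≤ k, 0 < sig Finset.univ j x) :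
      a * (∏ m ∈ Finset.Ico l k, sig Finset.univ (m + 1) x / sig Finset.univ m x)
          ^ ((1 : ℝ) / (Finset.Ico l k).card)
        = (∏ m ∈ Finset.Ico l k, a * (sig Finset.univ (m + 1) x / sig Finset.univ m x))
          ^ ((1 : ℝ) / (Finset.Ico l k).card) := by
    rw [Finset.prod_mul_distrib, Finset.prod_const, Real.mul_rpow (by positivity), one_div,
      Real.pow_rpow_inv_natCast ha.le (by exact_mod_cast hc0)]
    refine Finset.prod_nonneg fun m hm => ?_
    rw [Finset.mem_Ico] at hm
    exact (div_pos (hx _ (by omega)) (hx _ (by omega))).le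
  have ht1' : 0 < 1 - t := sub_pos.2 ht1
  rw [scale t ht0 lam hx, scale (1 - t) ht1' mu hy]
  have hom (a : ℝ) (ha : 0 < a) (x : Fin n → ℝ) (m : ℕ) :
      sig Finset.univ (m + 1) (fun i => a * x i) / sig Finset.univ m (fun i => a * x i)
        = a * (sig Finset.univ (m + 1) x / sig Finset.univ m x) := by
    rw [sig_smul, sig_smul, pow_succ, mul_assoc, mul_div_mul_left _ _ (pow_pos ha m).ne',
      mul_div_assoc]
  refine geom_mean_superadditive _ (Finset.nonempty_Ico.2 hlk) _ _ _ ?_ ?_ ?_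
  · intro m hm
    rw [Finset.mem_Ico] at hm
    exact mul_pos ht0 (div_pos (hx _ (by omega)) (hx _ (by omega)))
  · intro m hm
    rw [Finset.mem_Ico] at hm
    exact mul_pos ht1' (div_pos (hy _ (by omega)) (hy _ (by omega)))
  · intro m hm
    rw [Finset.mem_Ico] at hm
    have h := (superadditive m Finset.univ (fun i => t * lam i) (fun i => (1 - t) * mu i)
      (fun j hj => by rw [sig_smul]; exact mul_pos (pow_pos ht0 j) (hx j (by omega)))
      (fun j hj => by rw [sig_smul]; exact mul_pos (pow_pos ht1' j) (hy j (by omega)))).2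
    rw [hom t ht0, hom (1 - t) ht1'] at h
    exact h
end

section
/- Let n ≥ 2, let 1 ≤ l < k ≤ n be integers, and set α = 1/(k−l). Then for every δ > 0, every λ ∈ Γ_k and every ξ ∈ ℝ^n, −Σ_{p≠q} σ_{k−2}(λ|pq) ξ_p ξ_q + (1 − α + α/δ)·((σ_k)_ξ(λ))²/σ_k(λ) ≥ σ_k(λ)·(α + 1 − δα)·( (σ_l)_ξ(λ)/σ_l(λ) )² − (σ_k(λ)/σ_l(λ))·Σ_{p≠q} σ_{l−2}(λ|pq) ξ_p ξ_q. -/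
/-!
Write `σ_m` for `σ_m(λ)`, and let primes denote derivatives along `ξ`, so that
`(σ_m)_ξ = σ_m'` and `∑_{p ≠ q} σ_{m-2}(λ|pq) ξ_p ξ_q = σ_m''`.

The heart of the matter is that each quotient `σ_{m+1} / σ_m` is concave on `Γ_{m+1}`
(`quotForm_garding`), by induction on `m`. The identities
`(m+1) σ_{m+1} = ∑_i λ_i σ_m(λ|i)` and `σ_m = σ_m(λ|i) + λ_i σ_{m-1}(λ|i)` give
`(m+1) σ_{m+1} / σ_m = ∑_i λ_i q_i / (λ_i + q_i)` with `q_i = σ_m(λ|i) / σ_{m-1}(λ|i)`, and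
`y q / (y + q)` is concave in `(y, q)` and increasing in `q` where `y + q > 0`. The induction
deletes a variable, so it needs that `λ ∈ Γ_{m+1}` implies `λ|i ∈ Γ_m` (`garding_erase`); that
follows from the Newton inequality `σ_{j-1} σ_{j+1} ≤ σ_j²`, which holds because derivatives
of real-rooted polynomials are real-rooted (`newton_coeff`).

With `a_m = σ_m' / σ_m` and `c_m = σ_m'' / σ_m`, concavity of `σ_m / σ_{m-1}` reads
`c_m - c_{m-1} ≤ a_m² - a_{m-1}² - (a_m - a_{m-1})²`. Summing over `l < m ≤ k` and using
Cauchy–Schwarz gives `c_k - c_l ≤ a_k² - a_l² - α (a_k - a_l)²`, the concavity of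
`(σ_k / σ_l)^α` (`telescope`). The claim differs from this by `(α / δ) (δ a_l - a_k)² ≥ 0`.

Derivatives along `ξ` are handled algebraically: `σ_m(λ + tξ)` is a polynomial in `t`
(`linePoly`), and the derivatives are those of this polynomial at `t = 0`.
-/

open Finset

open Polynomial

/-! ### Elementary symmetric polynomials over a commutative ring -/

/-- The `m`-th elementary symmetric polynomial of the entries of `y` indexed by `A`, over any
commutative ring. -/
def esymG {ι R : Type*} [CommRing R] (A : Finset ι) (m : ℕ) (y : ι → R) : R :=
  ∑ s ∈ powersetCard m A, ∏ i ∈ s, y i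

section esymG

variable {ι R : Type*} [CommRing R]

lemma esymG_zero (A : Finset ι) (y : ι → R) : esymG A 0 y = 1 := by
  simp [esymG]

variable [DecidableEq ι]

lemma esymG_erase {A : Finset ι} {i : ι} (hi : i ∈ A) (m : ℕ) (y : ι → R) :
    esymG A (m + 1) y = esymG (A.erase i) (m + 1) y + y i * esymG (A.erase i) m y := by
  have hni : i ∉ A.erase i := notMem_erase i A
  have hnot : ∀ s ∈ powersetCard m (A.erase i), i ∉ s :=
    fun s hs his => hni ((mem_powersetCard.1 hs).1 his)
  conv_lhs => rw [← insert_erase hi]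
  unfold esymG
  rw [powersetCard_succ_insert hni, sum_union, sum_image, mul_sum]
  · congr 1
    exact sum_congr rfl fun s hs => prod_insert (hnot s hs)
  · intro s hs t ht h
    have := congrArg (fun u => u.erase i) h
    simpa [erase_insert (hnot s hs), erase_insert (hnot t ht)] using this
  · rw [disjoint_left]
    intro s hs hs'
    obtain ⟨t, -, rfl⟩ := mem_image.1 hs'
    exact hni ((mem_powersetCard.1 hs).1 (mem_insert_self i t))

/-- Double counting of the pairs `i ∈ s` with `s ⊆ A` of size `m + 1`: both the derivative
formula and Euler's identity are special cases. -/
lemma sum_mul_esymG_erase (A : Finset ι) (m : ℕ) (y z : ι → R) :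
    ∑ i ∈ A, z i * esymG (A.erase i) m y
      = ∑ s ∈ powersetCard (m + 1) A, ∑ i ∈ s, z i * ∏ j ∈ s.erase i, y j := by
  simp only [esymG, mul_sum]
  rw [sum_sigma', sum_sigma']
  refine sum_bij' (fun p _ => ⟨insert p.1 p.2, p.1⟩) (fun p _ => ⟨p.2, p.1.erase p.2⟩)
    ?_ ?_ ?_ ?_ ?_
  · rintro ⟨i, s⟩ h
    simp only [mem_sigma, mem_powersetCard] at h ⊢
    obtain ⟨hi, hs, hc⟩ := h
    have his : i ∉ s := fun h => notMem_erase i A (hs h)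
    refine ⟨⟨insert_subset hi (hs.trans (erase_subset _ _)), ?_⟩, mem_insert_self _ _⟩
    rw [card_insert_of_notMem his, hc]
  · rintro ⟨s, i⟩ h
    simp only [mem_sigma, mem_powersetCard] at h ⊢
    obtain ⟨⟨hs, hc⟩, hi⟩ := h
    refine ⟨hs hi, erase_subset_erase _ hs, ?_⟩
    rw [card_erase_of_mem hi, hc, Nat.add_sub_cancel]
  · rintro ⟨i, s⟩ h
    simp only [mem_sigma, mem_powersetCard] at h
    have his : i ∉ s := fun h' => notMem_erase i A (h.2.1 h')
    simp [erase_insert his]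
  · rintro ⟨s, i⟩ h
    simp only [mem_sigma] at h
    simp [insert_erase h.2]
  · rintro ⟨i, s⟩ h
    simp only [mem_sigma, mem_powersetCard] at h
    have his : i ∉ s := fun h' => notMem_erase i A (h.2.1 h')
    simp [erase_insert his]

lemma euler_esymG (A : Finset ι) (m : ℕ) (y : ι → R) :
    ((m : R) + 1) * esymG A (m + 1) y = ∑ i ∈ A, y i * esymG (A.erase i) m y := by
  rw [sum_mul_esymG_erase, esymG, mul_sum]
  refine sum_congr rfl fun s hs => ?_
  rw [sum_congr rfl fun i hi => mul_prod_erase s y hi, sum_const, (mem_powersetCard.1 hs).2]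
  simp

end esymG

/-- Newton's inequality for the coefficients of a real-rooted polynomial, with the factors
`j + 1` and `j + 2` that make the induction by differentiation close up. -/
lemma newton_coeff (j : ℕ) {p : ℝ[X]} (hp : p.Splits) :
    ((j : ℝ) + 2) * (p.coeff j * p.coeff (j + 2)) ≤ ((j : ℝ) + 1) * p.coeff (j + 1) ^ 2 := by
  induction j generalizing p with
  | zero =>
    have h := laguerre hp 0
    simp only [← coeff_zero_eq_eval_zero, coeff_derivative] at h
    norm_num at h ⊢
    linarith
  | succ j ih =>
    have h := ih (splits_derivative hp)
    simp only [coeff_derivative] at h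
    push_cast at h ⊢
    have hpos : (0 : ℝ) < ((j : ℝ) + 1) * (j + 2) := by positivity
    refine le_of_mul_le_mul_left ?_ hpos
    have e : j + 2 + 1 = j + 1 + 2 := by ring
    rw [e] at h
    linarith

lemma newton_esymG {ι : Type*} (A : Finset ι) (m : ℕ) (x : ι → ℝ) :
    esymG A m x * esymG A (m + 2) x ≤ esymG A (m + 1) x ^ 2 := by
  rcases lt_or_ge (#A) (m + 2) with h | h
  · have : esymG A (m + 2) x = 0 := by simp [esymG, powersetCard_eq_empty.2 h]
    rw [this, mul_zero]
    positivity
  · obtain ⟨j, hj⟩ := Nat.exists_eq_add_of_le h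
    have hs : (∏ i ∈ A, (X + C (x i))).Splits := Splits.prod fun i _ => Splits.X_add_C _
    have key := newton_coeff j hs
    rw [prod_X_add_C_coeff A x (by omega), prod_X_add_C_coeff A x (by omega),
      prod_X_add_C_coeff A x (by omega)] at key
    rw [show #A - j = m + 2 by omega, show #A - (j + 2) = m by omega,
      show #A - (j + 1) = m + 1 by omega] at key
    change ((j : ℝ) + 2) * (esymG A (m + 2) x * esymG A m x)
      ≤ ((j : ℝ) + 1) * esymG A (m + 1) x ^ 2 at key
    have hj0 : (0 : ℝ) ≤ j := j.cast_nonneg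
    by_contra! hlt
    nlinarith [sq_nonneg (esymG A (m + 1) x)]

/-- Deleting an entry of a vector in `Γ_{m+1}` leaves a vector in `Γ_m`. -/
lemma garding_erase {ι : Type*} [DecidableEq ι] {A : Finset ι} {x : ι → ℝ} {i : ι} (hi : i ∈ A)
    {m : ℕ} (h : ∀ j ≤ m + 1, 0 < esymG A j x) : ∀ j ≤ m, 0 < esymG (A.erase i) j x := by
  intro j
  induction j with
  | zero => intro _; simp [esymG_zero]
  | succ j ih =>
    intro hj
    have h0 := ih (by omega)
    have h1 := h (j + 1) (by omega)
    have h2 := h (j + 1 + 1) (by omega)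
    rw [esymG_erase hi] at h1 h2
    have hN := newton_esymG (A.erase i) j x
    rw [show j + 2 = j + 1 + 1 from rfl] at hN
    set a := esymG (A.erase i) j x
    set s := esymG (A.erase i) (j + 1) x
    set b := esymG (A.erase i) (j + 1 + 1) x
    -- If `s ≤ 0`, then `a * b > -(x i * a) * s ≥ s ^ 2`, against Newton's inequality.
    by_contra! hs
    have e1 : 0 ≤ (s + x i * a) * (-s) := mul_nonneg h1.le (by linarith)
    have e2 : 0 < (b + x i * s) * a := mul_pos h2 h0
    nlinarith

/-! ### Concavity of consecutive quotients -/

/-- The restriction `t ↦ σ_m(x + tξ)` of the `m`-th elementary symmetric polynomial to a line,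
as a polynomial in `t`. -/
noncomputable def linePoly {ι : Type*} (A : Finset ι) (m : ℕ) (x ξ : ι → ℝ) : ℝ[X] :=
  esymG A m fun i => C (x i) + C (ξ i) * X

/-- `quotForm u v` is `v(0)³` times the second derivative of `u / v` at `0`. -/
noncomputable def quotForm (u v : ℝ[X]) : ℝ :=
  (derivative (derivative u)).eval 0 * v.eval 0 ^ 2
    - 2 * (derivative u).eval 0 * (derivative v).eval 0 * v.eval 0
    - u.eval 0 * (derivative (derivative v)).eval 0 * v.eval 0
    + 2 * u.eval 0 * (derivative v).eval 0 ^ 2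

lemma quotForm_sum {ι : Type*} (A : Finset ι) (f : ι → ℝ[X]) (v : ℝ[X]) :
    quotForm (∑ i ∈ A, f i) v = ∑ i ∈ A, quotForm (f i) v := by
  simp only [quotForm, derivative_sum, eval_finsetSum, sum_add_distrib, sum_sub_distrib,
    sum_mul, mul_sum]

lemma quotForm_natCast_mul (m : ℕ) (u v : ℝ[X]) :
    quotForm (((m : ℝ[X]) + 1) * u) v = ((m : ℝ) + 1) * quotForm u v := by
  simp [quotForm, derivative_mul]
  ring

/-- The second derivative of `y q / (y + q)` for `y = y₀ + y₁ t` and `q = u / w`, with the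
denominators cleared. It is the concavity of the parallel sum combined with its monotonicity
in `q`. -/
lemma quotForm_parallel (u w : ℝ[X]) (a b : ℝ) :
    w.eval 0 * quotForm ((C a + C b * X) * u) (u + (C a + C b * X) * w)
      = a ^ 2 * (u + (C a + C b * X) * w).eval 0 * quotForm u w
        - 2 * (b * u.eval 0 * w.eval 0
          - a * ((derivative u).eval 0 * w.eval 0 - u.eval 0 * (derivative w).eval 0)) ^ 2 := by
  simp [quotForm, derivative_mul]
  ring

lemma eval_linePoly {ι : Type*} (A : Finset ι) (m : ℕ) (x ξ : ι → ℝ) :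
    (linePoly A m x ξ).eval 0 = esymG A m x := by
  simp [linePoly, esymG, eval_finsetSum, eval_prod]

/-- Concavity of `σ_{m+1} / σ_m` on `Γ_{m+1}`, in infinitesimal form. -/
lemma quotForm_garding {ι : Type*} [DecidableEq ι] (x ξ : ι → ℝ) (m : ℕ) (A : Finset ι)
    (h : ∀ j ≤ m + 1, 0 < esymG A j x) :
    quotForm (linePoly A (m + 1) x ξ) (linePoly A m x ξ) ≤ 0 := by
  induction m generalizing A with
  | zero =>
    have h1 : linePoly A 1 x ξ = ∑ i ∈ A, (C (x i) + C (ξ i) * X) := by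
      simp [linePoly, esymG, powersetCard_one]
    have h0 : linePoly A 0 x ξ = 1 := esymG_zero _ _
    rw [zero_add, h1, h0]
    simp [quotForm]
  | succ m ih =>
    have hsum : ((m + 1 : ℕ) + 1 : ℝ[X]) * linePoly A (m + 1 + 1) x ξ
        = ∑ i ∈ A, (C (x i) + C (ξ i) * X) * linePoly (A.erase i) (m + 1) x ξ :=
      euler_esymG A (m + 1) _
    have hneg : quotForm (((m + 1 : ℕ) + 1 : ℝ[X]) * linePoly A (m + 1 + 1) x ξ)
        (linePoly A (m + 1) x ξ) ≤ 0 := by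
      rw [hsum, quotForm_sum]
      refine sum_nonpos fun i hi => ?_
      have hE := garding_erase hi h
      have hw : 0 < (linePoly (A.erase i) m x ξ).eval 0 := by
        rw [eval_linePoly]; exact hE m (by omega)
      have hv : 0 < (linePoly A (m + 1) x ξ).eval 0 := by
        rw [eval_linePoly]; exact h (m + 1) (by omega)
      have hsplit : linePoly A (m + 1) x ξ = linePoly (A.erase i) (m + 1) x ξ
          + (C (x i) + C (ξ i) * X) * linePoly (A.erase i) m x ξ := esymG_erase hi m _
      have hq := ih (A.erase i) hE
      have key := quotForm_parallel (linePoly (A.erase i) (m + 1) x ξ)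
        (linePoly (A.erase i) m x ξ) (x i) (ξ i)
      rw [← hsplit] at key
      refine nonpos_of_mul_nonpos_right (a := (linePoly (A.erase i) m x ξ).eval 0) ?_ hw
      rw [key]
      have := mul_nonpos_of_nonneg_of_nonpos (mul_nonneg (sq_nonneg (x i)) hv.le) hq
      have h2 := sq_nonneg (ξ i * (linePoly (A.erase i) (m + 1) x ξ).eval 0
        * (linePoly (A.erase i) m x ξ).eval 0
          - x i * ((derivative (linePoly (A.erase i) (m + 1) x ξ)).eval 0
            * (linePoly (A.erase i) m x ξ).eval 0
            - (linePoly (A.erase i) (m + 1) x ξ).eval 0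
              * (derivative (linePoly (A.erase i) m x ξ)).eval 0))
      linarith
    rw [quotForm_natCast_mul] at hneg
    exact nonpos_of_mul_nonpos_right hneg (by positivity)

/-! ### Telescoping -/

/-- Summation of the step inequalities `c_{j+1} - c_j ≤ 2 a_j (a_{j+1} - a_j)`, with
Cauchy–Schwarz built into the induction. -/
lemma telescope (a c : ℕ → ℝ) (l r : ℕ)
    (h : ∀ j < r, c (l + j + 1) - c (l + j) ≤ 2 * a (l + j) * (a (l + j + 1) - a (l + j))) :
    (r : ℝ) * (c (l + r) - c l - a (l + r) ^ 2 + a l ^ 2) ≤ -(a (l + r) - a l) ^ 2 := by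
  have hsum : c (l + r) - c l - a (l + r) ^ 2 + a l ^ 2
      ≤ -∑ j ∈ range r, (a (l + j + 1) - a (l + j)) ^ 2 := by
    induction r with
    | zero => simp
    | succ r ih =>
      have h1 := ih fun j hj => h j (by omega)
      have h2 := h r (by omega)
      rw [sum_range_succ, ← add_assoc]
      linarith
  have hcs := sq_sum_le_card_mul_sum_sq (s := range r) (f := fun j => a (l + j + 1) - a (l + j))
  have htel : ∑ j ∈ range r, (a (l + j + 1) - a (l + j)) = a (l + r) - a l :=
    sum_range_sub (fun j => a (l + j)) r
  rw [htel, card_range] at hcs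
  have := mul_le_mul_of_nonneg_left hsum (Nat.cast_nonneg (α := ℝ) r)
  linarith

/-! ### Derivatives along a line -/

lemma derivative_linePoly {ι : Type*} [DecidableEq ι] (A : Finset ι) (m : ℕ) (x ξ : ι → ℝ) :
    derivative (linePoly A (m + 1) x ξ) = ∑ i ∈ A, C (ξ i) * linePoly (A.erase i) m x ξ := by
  simp only [linePoly]
  rw [sum_mul_esymG_erase, esymG, derivative_sum]
  refine sum_congr rfl fun s _ => ?_
  rw [derivative_prod_finset]
  refine sum_congr rfl fun i _ => ?_
  rw [mul_comm]
  simp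

lemma esymmOn_natCast {n : ℕ} (A : Finset (Fin n)) (m : ℕ) (x : Fin n → ℝ) :
    esymmOn A (m : ℤ) x = esymG A m x := by
  simp [esymmOn, esymG]

lemma esymDeriv_eq {n : ℕ} (m : ℕ) (hm : 1 ≤ m) (x ξ : Fin n → ℝ) :
    esymDeriv (m : ℤ) x ξ = (derivative (linePoly univ m x ξ)).eval 0 := by
  obtain ⟨m, rfl⟩ := Nat.exists_eq_add_of_le' hm
  rw [derivative_linePoly, eval_finsetSum]
  refine sum_congr rfl fun p _ => ?_
  rw [esymD1, show ((m + 1 : ℕ) : ℤ) - 1 = (m : ℤ) by push_cast; ring, esymmOn_natCast, eval_mul,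
    eval_C, eval_linePoly, mul_comm]

lemma sum_esymD2_eq {n : ℕ} (m : ℕ) (hm : 1 ≤ m) (x ξ : Fin n → ℝ) :
    ∑ p : Fin n, ∑ q ∈ univ.erase p, esymD2 ((m : ℤ) - 2) x p q * ξ p * ξ q
      = (derivative (derivative (linePoly univ m x ξ))).eval 0 := by
  obtain ⟨m, rfl⟩ := Nat.exists_eq_add_of_le' hm
  rw [derivative_linePoly, derivative_sum, eval_finsetSum]
  refine sum_congr rfl fun p _ => ?_
  rw [derivative_C_mul, eval_mul, eval_C]
  cases m with
  | zero =>
    have h0 : linePoly (univ.erase p) 0 x ξ = 1 := esymG_zero _ _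
    simp [h0, esymD2, esymmOn]
  | succ m =>
    rw [derivative_linePoly, eval_finsetSum, mul_sum]
    refine sum_congr rfl fun q _ => ?_
    rw [esymD2, show ((m + 1 + 1 : ℕ) : ℤ) - 2 = (m : ℤ) by push_cast; ring, esymmOn_natCast,
      eval_mul, eval_C, eval_linePoly]
    ring

/-- Lemma 7, inequality (2.3). -/
theorem concavity_ineq_delta (n k l : ℕ) (hn : 2 ≤ n) (hl : 1 ≤ l) (hlk : l < k) (hkn : k ≤ n)
    (α : ℝ) (hα : α = 1 / ((k : ℝ) - (l : ℝ))) (δ : ℝ) (hδ : 0 < δ)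
    (lam : Fin n → ℝ) (hlam : lam ∈ GardingCone n k) (ξ : Fin n → ℝ) :
    -(∑ p : Fin n, ∑ q ∈ Finset.univ.erase p, esymD2 ((k : ℤ) - 2) lam p q * ξ p * ξ q)
      + (1 - α + α / δ) * (esymDeriv (k : ℤ) lam ξ) ^ 2 / esym (k : ℤ) lam
    ≥ esym (k : ℤ) lam * (α + 1 - δ * α)
          * (esymDeriv (l : ℤ) lam ξ / esym (l : ℤ) lam) ^ 2
      - (esym (k : ℤ) lam / esym (l : ℤ) lam) *
          (∑ p : Fin n, ∑ q ∈ Finset.univ.erase p, esymD2 ((l : ℤ) - 2) lam p q * ξ p * ξ q) := by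
  have hpos : ∀ j ≤ k, 0 < esymG univ j lam := by
    intro j hj
    rcases Nat.eq_zero_or_pos j with rfl | hj0
    · simp [esymG_zero]
    · rw [← esymmOn_natCast]
      exact hlam j hj0 hj
  rw [sum_esymD2_eq k (by omega), sum_esymD2_eq l hl, esymDeriv_eq k (by omega),
    esymDeriv_eq l hl, esym, esym, esymmOn_natCast, esymmOn_natCast]
  set s : ℕ → ℝ := fun m => esymG univ m lam with hs
  set d : ℕ → ℝ := fun m => (derivative (linePoly univ m lam ξ)).eval 0 with hd
  set e : ℕ → ℝ := fun m => (derivative (derivative (linePoly univ m lam ξ))).eval 0 with he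
  have step : ∀ m, m + 1 ≤ k → e (m + 1) / s (m + 1) - e m / s m
      ≤ 2 * (d m / s m) * (d (m + 1) / s (m + 1) - d m / s m) := by
    intro m hm
    have h := quotForm_garding lam ξ m univ fun j hj => hpos j (by omega)
    simp only [quotForm, eval_linePoly] at h
    change e (m + 1) * s m ^ 2 - 2 * d (m + 1) * d m * s m - s (m + 1) * e m * s m
      + 2 * s (m + 1) * d m ^ 2 ≤ 0 at h
    have h0 : 0 < s m := hpos m (by omega)
    have h1 : 0 < s (m + 1) := hpos (m + 1) hm
    have hid : e (m + 1) / s (m + 1) - e m / s m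
        - 2 * (d m / s m) * (d (m + 1) / s (m + 1) - d m / s m)
        = (e (m + 1) * s m ^ 2 - 2 * d (m + 1) * d m * s m - s (m + 1) * e m * s m
          + 2 * s (m + 1) * d m ^ 2) / (s (m + 1) * s m ^ 2) := by
      field_simp
      ring
    have := div_nonpos_of_nonpos_of_nonneg h (by positivity : 0 ≤ s (m + 1) * s m ^ 2)
    linarith
  obtain ⟨r, rfl⟩ := Nat.exists_eq_add_of_le hlk.le
  have htel := telescope (fun m => d m / s m) (fun m => e m / s m) l r
    fun j hj => step (l + j) (by omega)
  have hr : (0 : ℝ) < r := by exact_mod_cast (by omega : 0 < r)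
  have hα' : α = 1 / (r : ℝ) := by rw [hα]; push_cast; congr 1; ring
  have hαpos : 0 < α := by rw [hα']; positivity
  have hαr : α * r = 1 := by rw [hα']; field_simp
  change -(e (l + r)) + (1 - α + α / δ) * d (l + r) ^ 2 / s (l + r)
    ≥ s (l + r) * (α + 1 - δ * α) * (d l / s l) ^ 2 - s (l + r) / s l * e l
  have hk0 : 0 < s (l + r) := hpos _ le_rfl
  have hl0 : 0 < s l := hpos _ (by omega)
  generalize s (l + r) = S at *
  generalize s l = T at *
  generalize d (l + r) = dk at *
  generalize d l = dl at *
  generalize e (l + r) = ek at *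
  generalize e l = el at *
  have hconc : ek / S - el / T - (dk / S) ^ 2 + (dl / T) ^ 2
      ≤ -(α * (dk / S - dl / T) ^ 2) := by
    have := mul_le_mul_of_nonneg_left htel hαpos.le
    rw [← mul_assoc, hαr, one_mul] at this
    linarith
  have hsq : 0 ≤ α / δ * (δ * (dl / T) - dk / S) ^ 2 := by positivity
  have hexp : α / δ * (δ * (dl / T) - dk / S) ^ 2
      = α * δ * (dl / T) ^ 2 - 2 * α * (dl / T) * (dk / S) + α / δ * (dk / S) ^ 2 := by
    field_simp
    ring
  rw [hexp] at hsq
  -- The claim divided by `S = σ_k`.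
  have hdiv : 0 ≤ -(ek / S) + (1 - α + α / δ) * (dk / S) ^ 2
      - (α + 1 - δ * α) * (dl / T) ^ 2 + el / T := by
    linarith
  have hmul := mul_nonneg hk0.le hdiv
  have hfin : S * (-(ek / S) + (1 - α + α / δ) * (dk / S) ^ 2
      - (α + 1 - δ * α) * (dl / T) ^ 2 + el / T)
      = (-ek + (1 - α + α / δ) * dk ^ 2 / S)
        - (S * (α + 1 - δ * α) * (dl / T) ^ 2 - S / T * el) := by
    field_simp
    ring
  linarith
end

section
/- Let n ≥ 2, let λ ∈ ℝ^n with σ_1(λ) ≠ 0, and let ξ ∈ ℝ^n. Then −Σ_{p≠q} ξ_p ξ_q = (1/σ_1(λ)²)·Σ_{i=1}^n ( σ_1(λ) ξ_i − λ_i Σ_{m=1}^n ξ_m )² − (2/σ_1(λ))·(σ_2)_ξ(λ)·Σ_{j=1}^n ξ_j + (2σ_2(λ)/σ_1(λ)²)·( Σ_{j=1}^n ξ_j )². -/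
/-!
Write `S = ∑ λ_i`, `X = ∑ ξ_i`, `P = ∑ λ_i ξ_i`, `Q = ∑ λ_i²` and `R = ∑ ξ_i²`.  Then
`σ₁ = S`, `2 σ₂ = S² - Q` (`two_mul_esymmOn_two`) and `(σ₂)_ξ = S X - P`, while the left-hand side
is `R - X²` and the sum of squares is `S² R - 2 S X P + X² Q`.  After these substitutions the claim
is an identity of rational functions in `S, X, P, Q, R` with `S ≠ 0`.
-/

open Finset

theorem esymmOn_one {n : ℕ} (A : Finset (Fin n)) (x : Fin n → ℝ) :
    esymmOn A 1 x = ∑ i ∈ A, x i := by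
  simp [esymmOn, Finset.powersetCard_one]

/-- Newton's identity `2 σ₂ = σ₁² - p₂` on a finite index set. -/
theorem two_mul_esymmOn_two {n : ℕ} (A : Finset (Fin n)) (x : Fin n → ℝ) :
    2 * esymmOn A 2 x = (∑ i ∈ A, x i) ^ 2 - ∑ i ∈ A, x i ^ 2 := by
  induction A using Finset.induction_on with
  | empty =>
    have h : Finset.powersetCard 2 (∅ : Finset (Fin n)) = ∅ :=
      Finset.powersetCard_eq_empty.2 (by simp)
    simp [esymmOn, h]
  | insert a A ha ih =>
    -- The pairs in `insert a A` are those in `A` together with the pairs `{a, i}`, `i ∈ A`.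
    have h : esymmOn (insert a A) 2 x = esymmOn A 2 x + x a * ∑ i ∈ A, x i := by
      have h2 : (2 : ℤ).toNat = 1 + 1 := rfl
      simp only [esymmOn, h2]
      rw [← Finset.esymm_map_val, ← Finset.esymm_map_val,
        Finset.insert_val_of_notMem ha, Multiset.map_cons]
      simp [Multiset.esymm, Multiset.powersetCard_one, Finset.mul_sum]
    rw [h, Finset.sum_insert ha, Finset.sum_insert ha]
    linear_combination ih

/-- The identity used in the proof of Lemma 10. -/
theorem sigma2_quotient_identity (n : ℕ) (hn : 2 ≤ n) (lam : Fin n → ℝ)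
    (hσ1 : esym (1 : ℤ) lam ≠ 0) (ξ : Fin n → ℝ) :
    -(∑ p : Fin n, ∑ q ∈ Finset.univ.erase p, ξ p * ξ q)
      = (1 / (esym (1 : ℤ) lam) ^ 2) *
          ∑ i : Fin n, (esym (1 : ℤ) lam * ξ i - lam i * ∑ m : Fin n, ξ m) ^ 2
        - (2 / esym (1 : ℤ) lam) * esymDeriv (2 : ℤ) lam ξ * (∑ j : Fin n, ξ j)
        + (2 * esym (2 : ℤ) lam / (esym (1 : ℤ) lam) ^ 2) * (∑ j : Fin n, ξ j) ^ 2 := by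
  have hS : esym (1 : ℤ) lam = ∑ i, lam i := esymmOn_one _ _
  have h2 : 2 * esym (2 : ℤ) lam = (∑ i, lam i) ^ 2 - ∑ i, lam i ^ 2 := two_mul_esymmOn_two _ _
  have hD : esymDeriv (2 : ℤ) lam ξ = (∑ i, lam i) * (∑ i, ξ i) - ∑ i, lam i * ξ i := by
    have h1 : (2 : ℤ) - 1 = 1 := rfl
    simp only [esymDeriv, esymD1, h1, esymmOn_one]
    rw [Finset.mul_sum, ← Finset.sum_sub_distrib]
    refine Finset.sum_congr rfl fun p _ => ?_
    rw [Finset.sum_erase_eq_sub (Finset.mem_univ p)]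
    ring
  have hL : ∑ p : Fin n, ∑ q ∈ Finset.univ.erase p, ξ p * ξ q
      = (∑ i, ξ i) ^ 2 - ∑ i, ξ i ^ 2 := by
    rw [sq, Finset.sum_mul, ← Finset.sum_sub_distrib]
    refine Finset.sum_congr rfl fun p _ => ?_
    rw [Finset.sum_erase_eq_sub (Finset.mem_univ p), ← Finset.mul_sum]
    ring
  have hsq : ∀ S X : ℝ, ∑ i, (S * ξ i - lam i * X) ^ 2
      = S ^ 2 * ∑ i, ξ i ^ 2 - 2 * S * X * ∑ i, lam i * ξ i + X ^ 2 * ∑ i, lam i ^ 2 := by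
    intro S X
    simp only [Finset.mul_sum]
    rw [← Finset.sum_sub_distrib, ← Finset.sum_add_distrib]
    exact Finset.sum_congr rfl fun i _ => by ring
  rw [hS] at hσ1
  rw [hL, hsq, h2, hD, hS]
  field_simp
  ring
end

section
/- Let n ≥ 2 and let κ ∈ ℝ^n satisfy σ_1(κ|l) ≥ 0 for every index l. Then for every index j and every ξ ∈ ℝ^n: Σ_{l≠j} e^{κ_l} ξ_l² + Σ_{l≠j} σ_1(κ|l)·g(κ_l, κ_j)·ξ_l² ≥ e^{κ_j}·Σ_{l≠j} ξ_l², where g(s,t) := (e^s − e^t)/(s − t) for s ≠ t and g(t,t) := e^t. -/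
/-!
Write `g = g(κ_l, κ_j)`. Since `e^{κ_l} - e^{κ_j} = (κ_l - κ_j) g`, and
`σ_1(κ|l) + κ_l = ∑ κ = σ_1(κ|j) + κ_j`, the coefficient of `ξ_l²` in the difference of the
two sides is `e^{κ_l} - e^{κ_j} + σ_1(κ|l) g = σ_1(κ|j) g`. This is nonnegative because `σ_1(κ|j) ≥ 0`
and `exp` is increasing (so `g ≥ 0`); thus the inequality holds term by term.
-/

open Finset

theorem esymD1_one {n : ℕ} (x : Fin n → ℝ) (i : Fin n) :
    esymD1 (1 : ℤ) x i = ∑ m, x m - x i := by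
  have h := Finset.sum_erase_add Finset.univ x (Finset.mem_univ i)
  simp only [esymD1, esymmOn, Int.toNat_one, Finset.powersetCard_one]
  simp only [zero_le_one, if_true, Finset.sum_map, Function.Embedding.coeFn_mk,
    Finset.prod_singleton]
  linarith

theorem sub_mul_expDD (s t : ℝ) : (s - t) * expDD s t = Real.exp s - Real.exp t := by
  unfold expDD
  split_ifs with h
  · simp [h]
  · exact mul_div_cancel₀ _ (sub_ne_zero.mpr h)

theorem expDD_nonneg (s t : ℝ) : 0 ≤ expDD s t := by
  unfold expDD
  split_ifs with h
  · exact (Real.exp_pos t).le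
  · rcases le_total s t with hst | hst
    · exact div_nonneg_of_nonpos (sub_nonpos.mpr (Real.exp_le_exp.mpr hst)) (sub_nonpos.mpr hst)
    · exact div_nonneg (sub_nonneg.mpr (Real.exp_le_exp.mpr hst)) (sub_nonneg.mpr hst)

/-- The claim in the proof of Lemma 14. -/
theorem exp_divided_difference_claim (n : ℕ) (hn : 2 ≤ n) (κ : Fin n → ℝ)
    (hκ : ∀ l : Fin n, 0 ≤ esymD1 (1 : ℤ) κ l) (j : Fin n) (ξ : Fin n → ℝ) :
    Real.exp (κ j) * ∑ l ∈ Finset.univ.erase j, ξ l ^ 2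
      ≤ ∑ l ∈ Finset.univ.erase j, Real.exp (κ l) * ξ l ^ 2
        + ∑ l ∈ Finset.univ.erase j, esymD1 (1 : ℤ) κ l * expDD (κ l) (κ j) * ξ l ^ 2 := by
  rw [Finset.mul_sum, ← Finset.sum_add_distrib]
  refine Finset.sum_le_sum fun l _ => ?_
  have hcoef : Real.exp (κ l) - Real.exp (κ j) + esymD1 (1 : ℤ) κ l * expDD (κ l) (κ j)
      = esymD1 (1 : ℤ) κ j * expDD (κ l) (κ j) := by
    rw [← sub_mul_expDD, esymD1_one, esymD1_one]
    ring
  have hnonneg := mul_nonneg (mul_nonneg (hκ j) (expDD_nonneg (κ l) (κ j))) (sq_nonneg (ξ l))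
  rw [← hcoef] at hnonneg
  linarith
end

section
/- Let n ≥ 2, let 2 ≤ k ≤ n be an integer, let 1 ≤ Λ ≤ k−1, let δ ∈ (0,1], and let f₀ > 0. There exist constants K > 0 and δ' > 0, depending only on n, k, δ, f₀, with the following property. Let κ ∈ ℝ^n with κ_1 ≥ κ_2 ≥ … ≥ κ_n ≥ 0, σ_k(κ) ≥ f₀, κ_Λ ≥ δ·κ_1, and κ_{Λ+1} ≤ δ'·κ_1, and set P = Σ_{l=1}^n κ_l². Then for every index i with 1 ≤ i ≤ Λ and every ξ ∈ ℝ^n: A_i + B_i + C_i + D_i − E_i ≥ 0, where A_i = (κ_i/P)·( K·((σ_k)_ξ(κ))² − Σ_{p≠q} σ_{k−2}(κ|pq) ξ_p ξ_q ), B_i = (2/P)·Σ_{j≠i} κ_j·σ_{k−2}(κ|ij)·ξ_j², C_i = (2/P)·Σ_{j≠i} σ_{k−1}(κ|j)·ξ_j², D_i = (σ_{k−1}(κ|i)/P)·Σ_{j=1}^n ξ_j², and E_i = (2σ_{k−1}(κ|i)/P²)·( Σ_{j=1}^n κ_j ξ_j )². -/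
/-!
Write `M = κ₁`. By Cauchy–Schwarz, `P (D_i - E_i) ≥ -σ_{k-1}(κ|i) |ξ|²`, and the identity
`σ_{k-1}(κ|i) = κ_j σ_{k-2}(κ|ij) + σ_{k-1}(κ|ij)` (and the same with `i`, `j` exchanged) shows that
`P (B_i + C_i + D_i - E_i) ≥ -σ_{k-1}(κ|i) ξ_i² + ∑_{j ≠ i} σ_{k-1}(κ|j) ξ_j²`.
Since `Λ < k`, every monomial of `σ_k` contains a small entry, so `σ_{k-1}(κ|j)` is at least
`σ_k / (2M)` for every `j` and at least `σ_k / (2ρM)` for `j > Λ`, where `ρ = n δ'`.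

For `A_i`, the quotient `σ_{m+1} / σ_m` is concave on the nonnegative orthant
(`eSym_quotient_concave`). Adding the resulting inequalities for `log (σ_{m+1} / σ_m)`,
`Λ ≤ m < k`, gives the concavity of `(σ_k / σ_Λ) ^ (1 / (k - Λ))` (`log_chain`). With `K = 2 / f₀`
the term `K ((σ_k)_ξ)²` absorbs the logarithmic derivative of `σ_k`, whence
`P A_i ≥ κ_i σ_k ((1 + 1/(2n)) w² - z)`, where `w` and `z` are the first and second derivatives of
`σ_Λ` in the direction `ξ`, divided by `σ_Λ` (`second_derivative_bound`).

For small `δ'` the polynomial `σ_Λ` is close to the product of the `Λ` large entries, for which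
`w² - z = ∑_{a ≤ Λ} (ξ_a / κ_a)²`. The `i`-th summand compensates `-σ_{k-1}(κ|i) ξ_i²`, since
`κ_i σ_{k-1}(κ|i) ≤ σ_k`. This compensation is only exact up to an error `O(δ') ξ_i²`, and the
error is dominated by `w² / (2n)` together with the positive terms in `ξ_j²`, `j ≠ i`
(`form_nonneg`, `sigma_form`).
-/

open Finset

/-! ### Elementary symmetric polynomials and their directional derivatives -/

set_option linter.unusedSectionVars false

section Elementary

variable {ι R : Type*} [DecidableEq ι] [CommRing R]

/-- The elementary symmetric polynomial of degree `m` in the entries `f i`, `i ∈ A`, over an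
arbitrary commutative ring; it vanishes for `m < 0`. -/
def eSym (A : Finset ι) (m : ℤ) (f : ι → R) : R :=
  if 0 ≤ m then ∑ s ∈ Finset.powersetCard m.toNat A, ∏ i ∈ s, f i else 0

lemma eSym_natCast (A : Finset ι) (m : ℕ) (f : ι → R) :
    eSym A (m : ℤ) f = ∑ s ∈ Finset.powersetCard m A, ∏ i ∈ s, f i := by
  simp [eSym]

lemma eSym_of_neg (A : Finset ι) {m : ℤ} (hm : m < 0) (f : ι → R) : eSym A m f = 0 := by
  simp [eSym, hm]

lemma eSym_zero (A : Finset ι) (f : ι → R) : eSym A 0 f = 1 := by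
  simp [eSym]

lemma eSym_insert {A : Finset ι} {i : ι} (hi : i ∉ A) (m : ℤ) (f : ι → R) :
    eSym (insert i A) m f = f i * eSym A (m - 1) f + eSym A m f := by
  rcases lt_trichotomy m 0 with hm | rfl | hm
  · simp [eSym_of_neg _ hm, eSym_of_neg _ (show m - 1 < 0 by omega)]
  · simp [eSym_zero, eSym_of_neg]
  · obtain ⟨k, rfl⟩ : ∃ k : ℕ, m = ((k + 1 : ℕ) : ℤ) := ⟨(m - 1).toNat, by omega⟩
    rw [show ((k + 1 : ℕ) : ℤ) - 1 = (k : ℤ) by push_cast; ring]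
    simp only [eSym_natCast]
    rw [Finset.powersetCard_succ_insert hi, Finset.sum_union, add_comm, Finset.sum_image]
    · congr 1
      rw [Finset.mul_sum]
      refine Finset.sum_congr rfl fun s hs => ?_
      rw [Finset.prod_insert]
      exact fun h => hi ((Finset.mem_powersetCard.1 hs).1 h)
    · intro s hs t ht h
      have hs' : i ∉ s := fun h' => hi ((Finset.mem_powersetCard.1 hs).1 h')
      have ht' : i ∉ t := fun h' => hi ((Finset.mem_powersetCard.1 ht).1 h')
      rw [← Finset.erase_insert hs', ← Finset.erase_insert ht']
      exact congrArg (fun u => Finset.erase u i) h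
    · rw [Finset.disjoint_left]
      intro s hs ht
      obtain ⟨t, _, rfl⟩ := Finset.mem_image.1 ht
      exact hi ((Finset.mem_powersetCard.1 hs).1 (Finset.mem_insert_self i t))

lemma eSym_erase {A : Finset ι} {i : ι} (hi : i ∈ A) (m : ℤ) (f : ι → R) :
    eSym A m f = f i * eSym (A.erase i) (m - 1) f + eSym (A.erase i) m f := by
  conv_lhs => rw [← Finset.insert_erase hi]
  exact eSym_insert (Finset.notMem_erase i A) m f

lemma eSym_empty_mul (m : ℤ) (f : ι → R) : (m : R) * eSym (∅ : Finset ι) m f = 0 := by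
  rcases lt_trichotomy m 0 with hm | rfl | hm
  · simp [eSym_of_neg _ hm]
  · simp
  · obtain ⟨k, rfl⟩ : ∃ k : ℕ, m = ((k + 1 : ℕ) : ℤ) := ⟨(m - 1).toNat, by omega⟩
    rw [eSym_natCast, Finset.powersetCard_eq_empty.2 (by simp)]
    simp

/-- Euler's identity for homogeneous polynomials. -/
lemma eSym_euler (A : Finset ι) (m : ℤ) (f : ι → R) :
    (m : R) * eSym A m f = ∑ i ∈ A, f i * eSym (A.erase i) (m - 1) f := by
  induction A using Finset.induction_on generalizing m with
  | empty => simpa using eSym_empty_mul m f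
  | insert a A ha ih =>
    have h : ∀ i ∈ A, f i * eSym ((insert a A).erase i) (m - 1) f
        = f a * (f i * eSym (A.erase i) (m - 1 - 1) f) + f i * eSym (A.erase i) (m - 1) f := by
      intro i hi
      have hne : a ≠ i := fun h => ha (h ▸ hi)
      rw [Finset.erase_insert_of_ne hne,
        eSym_insert (fun h => ha (Finset.mem_of_mem_erase h))]
      ring
    rw [Finset.sum_insert ha, Finset.erase_insert ha, Finset.sum_congr rfl h,
      Finset.sum_add_distrib, ← Finset.mul_sum, ← ih, ← ih, eSym_insert ha]
    push_cast
    ring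

end Elementary

section Derivatives

variable {ι : Type*} [DecidableEq ι]

/-- First derivative at `x`, in the direction `ξ`, of `eSym A m`. -/
def eSymD (A : Finset ι) (m : ℤ) (x ξ : ι → ℝ) : ℝ :=
  ∑ p ∈ A, eSym (A.erase p) (m - 1) x * ξ p

/-- Second derivative at `x`, in the direction `ξ`, of `eSym A m`. -/
def eSymDD (A : Finset ι) (m : ℤ) (x ξ : ι → ℝ) : ℝ :=
  ∑ p ∈ A, ∑ q ∈ A.erase p, eSym ((A.erase p).erase q) (m - 2) x * ξ p * ξ q

/-- The line `t ↦ x + t ξ`, with entries viewed as polynomials in `t`. -/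
noncomputable def line (x ξ : ι → ℝ) (p : ι) : Polynomial ℝ :=
  Polynomial.C (x p) + Polynomial.C (ξ p) * Polynomial.X

lemma derivative_eSym_line (A : Finset ι) (m : ℤ) (x ξ : ι → ℝ) :
    Polynomial.derivative (eSym A m (line x ξ))
      = ∑ p ∈ A, Polynomial.C (ξ p) * eSym (A.erase p) (m - 1) (line x ξ) := by
  induction A using Finset.induction_on generalizing m with
  | empty =>
    by_cases hm : 0 ≤ m
    · simp only [eSym, hm, if_true, Finset.sum_empty]
      rw [Polynomial.derivative_sum]
      refine Finset.sum_eq_zero fun s hs => ?_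
      rw [Finset.subset_empty.1 (Finset.mem_powersetCard.1 hs).1]
      simp
    · simp [eSym, hm]
  | insert a A ha ih =>
    have h : ∀ i ∈ A, Polynomial.C (ξ i) * eSym ((insert a A).erase i) (m - 1) (line x ξ)
        = line x ξ a * (Polynomial.C (ξ i) * eSym (A.erase i) (m - 1 - 1) (line x ξ))
          + Polynomial.C (ξ i) * eSym (A.erase i) (m - 1) (line x ξ) := by
      intro i hi
      have hne : a ≠ i := fun h => ha (h ▸ hi)
      rw [Finset.erase_insert_of_ne hne,
        eSym_insert (fun h => ha (Finset.mem_of_mem_erase h))]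
      ring
    rw [Finset.sum_insert ha, Finset.erase_insert ha, Finset.sum_congr rfl h,
      Finset.sum_add_distrib, ← Finset.mul_sum, ← ih, ← ih, eSym_insert ha,
      Polynomial.derivative_add, Polynomial.derivative_mul]
    simp only [line, Polynomial.derivative_add, Polynomial.derivative_C,
      Polynomial.derivative_mul, Polynomial.derivative_X]
    ring

lemma eval_eSym_line (A : Finset ι) (m : ℤ) (x ξ : ι → ℝ) :
    (eSym A m (line x ξ)).eval 0 = eSym A m x := by
  by_cases hm : 0 ≤ m
  · simp [eSym, hm, Polynomial.eval_finsetSum, Polynomial.eval_prod, line]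
  · simp [eSym, hm]

lemma eval_derivative_eSym_line (A : Finset ι) (m : ℤ) (x ξ : ι → ℝ) :
    (Polynomial.derivative (eSym A m (line x ξ))).eval 0 = eSymD A m x ξ := by
  rw [derivative_eSym_line, Polynomial.eval_finsetSum]
  simp [eval_eSym_line, eSymD, mul_comm]

lemma eval_derivative2_eSym_line (A : Finset ι) (m : ℤ) (x ξ : ι → ℝ) :
    (Polynomial.derivative (Polynomial.derivative (eSym A m (line x ξ)))).eval 0
      = eSymDD A m x ξ := by
  rw [derivative_eSym_line, Polynomial.derivative_sum, Polynomial.eval_finsetSum]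
  refine Finset.sum_congr rfl fun p _ => ?_
  rw [Polynomial.derivative_mul, Polynomial.derivative_C, zero_mul, zero_add,
    Polynomial.eval_mul, eval_derivative_eSym_line, Polynomial.eval_C, eSymD, Finset.mul_sum]
  refine Finset.sum_congr rfl fun q _ => ?_
  rw [show m - 1 - 1 = m - 2 by ring]
  ring

lemma eSymD_erase {A : Finset ι} {i : ι} (hi : i ∈ A) (m : ℤ) (x ξ : ι → ℝ) :
    eSymD A m x ξ = ξ i * eSym (A.erase i) (m - 1) x + x i * eSymD (A.erase i) (m - 1) x ξ
      + eSymD (A.erase i) m x ξ := by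
  simp only [← eval_derivative_eSym_line, ← eval_eSym_line _ _ x ξ]
  rw [eSym_erase hi]
  simp [line]

lemma eSymDD_erase {A : Finset ι} {i : ι} (hi : i ∈ A) (m : ℤ) (x ξ : ι → ℝ) :
    eSymDD A m x ξ = 2 * ξ i * eSymD (A.erase i) (m - 1) x ξ
      + x i * eSymDD (A.erase i) (m - 1) x ξ + eSymDD (A.erase i) m x ξ := by
  simp only [← eval_derivative_eSym_line, ← eval_derivative2_eSym_line]
  rw [eSym_erase hi]
  simp [line]
  ring

lemma eSymD_euler (A : Finset ι) (m : ℤ) (x ξ : ι → ℝ) :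
    (m : ℝ) * eSymD A m x ξ = ∑ i ∈ A, (ξ i * eSym (A.erase i) (m - 1) x
      + x i * eSymD (A.erase i) (m - 1) x ξ) := by
  have h := congrArg (fun p => (Polynomial.derivative p).eval 0) (eSym_euler A m (line x ξ))
  simp only [Polynomial.derivative_sum, Polynomial.eval_finsetSum, Polynomial.derivative_mul,
    Polynomial.eval_add, Polynomial.eval_mul, Polynomial.derivative_intCast,
    eval_derivative_eSym_line, eval_eSym_line] at h
  simpa [line] using h

lemma eSymDD_euler (A : Finset ι) (m : ℤ) (x ξ : ι → ℝ) :
    (m : ℝ) * eSymDD A m x ξ = ∑ i ∈ A, (2 * ξ i * eSymD (A.erase i) (m - 1) x ξ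
      + x i * eSymDD (A.erase i) (m - 1) x ξ) := by
  have h := congrArg (fun p => (Polynomial.derivative (Polynomial.derivative p)).eval 0)
    (eSym_euler A m (line x ξ))
  simp only [Polynomial.derivative_sum, Polynomial.eval_finsetSum, Polynomial.derivative_mul,
    Polynomial.derivative_add,
    Polynomial.eval_add, Polynomial.eval_mul, Polynomial.derivative_intCast,
    eval_derivative_eSym_line, eval_derivative2_eSym_line, eval_eSym_line] at h
  simp [line] at h
  rw [h]
  exact Finset.sum_congr rfl fun i _ => by ring

end Derivatives

/-! ### Concavity of `σ_{m+1} / σ_m` -/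

section Positivity

variable {ι : Type*} [DecidableEq ι] {x : ι → ℝ}

lemma eSym_nonneg (hx : ∀ i, 0 ≤ x i) (A : Finset ι) (m : ℤ) : 0 ≤ eSym A m x := by
  unfold eSym
  split_ifs
  · exact Finset.sum_nonneg fun s _ => Finset.prod_nonneg fun i _ => hx i
  · exact le_rfl

lemma eSym_mono (hx : ∀ i, 0 ≤ x i) {A B : Finset ι} (h : A ⊆ B) (m : ℤ) :
    eSym A m x ≤ eSym B m x := by
  unfold eSym
  split_ifs
  · exact Finset.sum_le_sum_of_subset_of_nonneg (Finset.powersetCard_mono h)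
      fun s _ _ => Finset.prod_nonneg fun i _ => hx i
  · exact le_rfl

lemma eSym_pos_pred (hx : ∀ i, 0 ≤ x i) {A : Finset ι} {m : ℕ}
    (h : 0 < eSym A ((m : ℤ) + 1) x) : 0 < eSym A m x := by
  refine (eSym_nonneg hx A m).lt_of_ne fun h0 => ?_
  have he := eSym_euler A ((m : ℤ) + 1) x
  have hle : ∑ i ∈ A, x i * eSym (A.erase i) ((m : ℤ) + 1 - 1) x ≤ 0 := by
    refine Finset.sum_nonpos fun i _ => ?_
    have h1 := eSym_mono hx (Finset.erase_subset i A) (m : ℤ)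
    rw [← h0] at h1
    rw [show (m : ℤ) + 1 - 1 = m by ring]
    exact mul_nonpos_of_nonneg_of_nonpos (hx i) h1
  rw [← he] at hle
  push_cast at hle
  have : (0 : ℝ) < ((m : ℝ) + 1) * eSym A ((m : ℤ) + 1) x := by positivity
  linarith

lemma eSym_erase_pos (hx : ∀ i, 0 ≤ x i) {A : Finset ι} {i : ι} (hi : i ∈ A) {m : ℕ}
    (h : 0 < eSym A ((m : ℤ) + 1) x) : 0 < eSym (A.erase i) m x := by
  refine (eSym_nonneg hx _ _).lt_of_ne fun h0 => ?_
  rw [eSym_erase hi, show (m : ℤ) + 1 - 1 = m by ring, ← h0, mul_zero, zero_add] at h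
  have := eSym_pos_pred hx h
  linarith

lemma eSym_pos_of_le (hx : ∀ i, 0 ≤ x i) {A : Finset ι} {m k : ℕ} (hmk : m ≤ k)
    (h : 0 < eSym A (k : ℤ) x) : 0 < eSym A (m : ℤ) x := by
  induction k, hmk using Nat.le_induction with
  | base => exact h
  | succ k _ ih => exact ih (eSym_pos_pred hx (by exact_mod_cast h))

/-- Concavity of `σ_{m+1} / σ_m` on the nonnegative orthant, as the sign of the numerator of its
second derivative. It rests on the representation
`(m+1) σ_{m+1} / σ_m = ∑ i, x i * g i / (x i + g i)` with `g i = σ_m(x|i) / σ_{m-1}(x|i)`: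
the map `(s, t) ↦ s t / (s + t)` is concave and increasing, and `g i` is concave by induction. -/
lemma eSym_quotient_concave (hx : ∀ i, 0 ≤ x i) (ξ : ι → ℝ) (m : ℕ) (A : Finset ι)
    (h : 0 < eSym A (m : ℤ) x) :
    eSymDD A ((m : ℤ) + 1) x ξ * eSym A m x ^ 2
      - 2 * eSymD A ((m : ℤ) + 1) x ξ * eSymD A m x ξ * eSym A m x
      - eSym A ((m : ℤ) + 1) x * eSymDD A m x ξ * eSym A m x
      + 2 * eSym A ((m : ℤ) + 1) x * eSymD A m x ξ ^ 2 ≤ 0 := by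
  induction m generalizing A with
  | zero => simp [eSym_zero, eSymD, eSymDD, eSym_of_neg]
  | succ m ih =>
    push_cast at h ⊢
    have e0 := eSym_euler A ((m : ℤ) + 1 + 1) x
    have e1 := eSymD_euler A ((m : ℤ) + 1 + 1) x ξ
    have e2 := eSymDD_euler A ((m : ℤ) + 1 + 1) x ξ
    push_cast at e0 e1 e2
    set b := eSym A ((m : ℤ) + 1) x with hb
    set b1 := eSymD A ((m : ℤ) + 1) x ξ with hb1
    set b2 := eSymDD A ((m : ℤ) + 1) x ξ with hb2
    have hm : (0 : ℝ) < (m : ℝ) + 1 + 1 := by positivity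
    refine nonpos_of_mul_nonpos_right (a := (m : ℝ) + 1 + 1) ?_ hm
    -- The numerator is linear in `σ_{m+2}`, so Euler's identity splits it into one term per `i`.
    rw [show ((m : ℝ) + 1 + 1) * (eSymDD A ((m : ℤ) + 1 + 1) x ξ * b ^ 2
        - 2 * eSymD A ((m : ℤ) + 1 + 1) x ξ * b1 * b - eSym A ((m : ℤ) + 1 + 1) x * b2 * b
        + 2 * eSym A ((m : ℤ) + 1 + 1) x * b1 ^ 2)
      = (((m : ℝ) + 1 + 1) * eSymDD A ((m : ℤ) + 1 + 1) x ξ) * b ^ 2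
        - (((m : ℝ) + 1 + 1) * eSymD A ((m : ℤ) + 1 + 1) x ξ) * (2 * b1 * b)
        - (((m : ℝ) + 1 + 1) * eSym A ((m : ℤ) + 1 + 1) x) * (b2 * b)
        + (((m : ℝ) + 1 + 1) * eSym A ((m : ℤ) + 1 + 1) x) * (2 * b1 ^ 2) by ring,
      e0, e1, e2]
    simp only [Finset.sum_mul]
    rw [← Finset.sum_sub_distrib, ← Finset.sum_sub_distrib, ← Finset.sum_add_distrib]
    refine Finset.sum_nonpos fun i hi => ?_
    have hv := eSym_erase_pos hx hi h
    have hC := ih (A.erase i) hv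
    have r0 := eSym_erase hi ((m : ℤ) + 1) x
    have r1 := eSymD_erase hi ((m : ℤ) + 1) x ξ
    have r2 := eSymDD_erase hi ((m : ℤ) + 1) x ξ
    rw [← hb] at r0
    rw [← hb1] at r1
    rw [← hb2] at r2
    have s1 : (m : ℤ) + 1 - 1 = m := by ring
    have s2 : (m : ℤ) + 1 + 1 - 1 = (m : ℤ) + 1 := by ring
    rw [s1] at r0 r1 r2
    rw [s2]
    set v := eSym (A.erase i) (m : ℤ) x
    set v1 := eSymD (A.erase i) (m : ℤ) x ξ
    set v2 := eSymDD (A.erase i) (m : ℤ) x ξ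
    set u := eSym (A.erase i) ((m : ℤ) + 1) x
    set u1 := eSymD (A.erase i) ((m : ℤ) + 1) x ξ
    set u2 := eSymDD (A.erase i) ((m : ℤ) + 1) x ξ
    refine nonpos_of_mul_nonpos_right (a := v) ?_ hv
    have key : v * ((2 * ξ i * u1 + x i * u2) * b ^ 2 - (ξ i * u + x i * u1) * (2 * b1 * b)
        - x i * u * (b2 * b) + x i * u * (2 * b1 ^ 2))
      = (u2 * v ^ 2 - 2 * u1 * v1 * v - u * v2 * v + 2 * u * v1 ^ 2) * (x i ^ 2 * b)
        - 2 * (x i * (u1 * v - u * v1) - u * v * ξ i) ^ 2 := by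
      rw [r0, r1, r2]
      ring
    rw [key]
    have h1 := mul_nonpos_of_nonpos_of_nonneg hC
      (mul_nonneg (sq_nonneg (x i)) (le_of_lt h))
    nlinarith [sq_nonneg (x i * (u1 * v - u * v1) - u * v * ξ i)]

end Positivity

/-! ### Concavity of `(σ_k / σ_l) ^ (1 / (k - l))` -/

section Chain

variable {ι : Type*} [DecidableEq ι] {x : ι → ℝ}

/-- One step of the chain: `-(log g)'' ≥ ((log g)')²` for `g = σ_{m+1} / σ_m`. -/
lemma log_step (hx : ∀ i, 0 ≤ x i) (ξ : ι → ℝ) (m : ℕ) (A : Finset ι)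
    (h : 0 < eSym A ((m : ℤ) + 1) x) :
    eSymDD A ((m : ℤ) + 1) x ξ / eSym A ((m : ℤ) + 1) x - eSymDD A m x ξ / eSym A m x
      ≤ (eSymD A ((m : ℤ) + 1) x ξ / eSym A ((m : ℤ) + 1) x) ^ 2
        - (eSymD A m x ξ / eSym A m x) ^ 2
        - (eSymD A ((m : ℤ) + 1) x ξ / eSym A ((m : ℤ) + 1) x
            - eSymD A m x ξ / eSym A m x) ^ 2 := by
  have hb := eSym_pos_pred hx h
  have hc := eSym_quotient_concave hx ξ m A hb
  set a := eSym A ((m : ℤ) + 1) x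
  set a1 := eSymD A ((m : ℤ) + 1) x ξ
  set a2 := eSymDD A ((m : ℤ) + 1) x ξ
  set b := eSym A (m : ℤ) x
  set b1 := eSymD A (m : ℤ) x ξ
  set b2 := eSymDD A (m : ℤ) x ξ
  have hq : (a2 * b ^ 2 - 2 * a1 * b1 * b - a * b2 * b + 2 * a * b1 ^ 2) / (a * b ^ 2) ≤ 0 :=
    div_nonpos_of_nonpos_of_nonneg hc (by positivity)
  have he : a2 / a - b2 / b - ((a1 / a) ^ 2 - (b1 / b) ^ 2 - (a1 / a - b1 / b) ^ 2)
      = (a2 * b ^ 2 - 2 * a1 * b1 * b - a * b2 * b + 2 * a * b1 ^ 2) / (a * b ^ 2) := by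
    field_simp
    ring
  linarith

/-- Concavity of `(σ_{l+r} / σ_l) ^ (1/r)`, in terms of logarithmic derivatives. -/
lemma log_chain (hx : ∀ i, 0 ≤ x i) (ξ : ι → ℝ) (A : Finset ι) (l r : ℕ)
    (h : 0 < eSym A ((l + r : ℕ) : ℤ) x) :
    eSymDD A ((l + r : ℕ) : ℤ) x ξ / eSym A ((l + r : ℕ) : ℤ) x
        - eSymDD A l x ξ / eSym A l x
      ≤ (eSymD A ((l + r : ℕ) : ℤ) x ξ / eSym A ((l + r : ℕ) : ℤ) x) ^ 2
        - (eSymD A l x ξ / eSym A l x) ^ 2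
        - (eSymD A ((l + r : ℕ) : ℤ) x ξ / eSym A ((l + r : ℕ) : ℤ) x
            - eSymD A l x ξ / eSym A l x) ^ 2 / r := by
  induction r with
  | zero => simp
  | succ r ih =>
    have hcast : ((l + (r + 1) : ℕ) : ℤ) = ((l + r : ℕ) : ℤ) + 1 := by push_cast; ring
    rw [hcast] at h ⊢
    have h1 := ih (eSym_pos_pred hx h)
    have h2 := log_step hx ξ (l + r) A h
    set u := eSymD A (((l + r : ℕ) : ℤ) + 1) x ξ / eSym A (((l + r : ℕ) : ℤ) + 1) x
    set v := eSymD A ((l + r : ℕ) : ℤ) x ξ / eSym A ((l + r : ℕ) : ℤ) x with hv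
    set w := eSymD A (l : ℤ) x ξ / eSym A (l : ℤ) x with hw
    have key : (u - w) ^ 2 / ((r + 1 : ℕ) : ℝ) ≤ (v - w) ^ 2 / r + (u - v) ^ 2 := by
      rcases Nat.eq_zero_or_pos r with rfl | hr
      · have : v = w := by simp [hv, hw]
        simp [this]
      · have hr' : (0 : ℝ) < r := by exact_mod_cast hr
        obtain ⟨g, hg⟩ : ∃ g, v - w = g * r := ⟨(v - w) / r, by field_simp⟩
        have e1 : (v - w) ^ 2 / r = g ^ 2 * r := by rw [hg]; field_simp
        have e2 : u - w = (u - v) + g * r := by linarith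
        rw [e1, e2, div_le_iff₀ (by positivity)]
        push_cast
        nlinarith [mul_nonneg hr'.le (sq_nonneg (g - (u - v)))]
    linarith

/-- The term `K ((σ_k)_ξ)²` absorbs the first logarithmic derivative of `σ_k`, leaving a
strictly log-concave contribution of `σ_l`. -/
lemma second_derivative_bound (hx : ∀ i, 0 ≤ x i) (ξ : ι → ℝ) (A : Finset ι) {l k n : ℕ}
    (hlk : l < k) (hkn : k ≤ n) {f₀ : ℝ} (hf₀ : 0 < f₀) (h : f₀ ≤ eSym A (k : ℤ) x) :
    eSym A (k : ℤ) x * ((1 + 1 / (2 * n)) * (eSymD A l x ξ / eSym A l x) ^ 2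
        - eSymDD A l x ξ / eSym A l x)
      ≤ 2 / f₀ * eSymD A (k : ℤ) x ξ ^ 2 - eSymDD A (k : ℤ) x ξ := by
  obtain ⟨r, rfl⟩ : ∃ r, k = l + r := ⟨k - l, by omega⟩
  have hT : 0 < eSym A ((l + r : ℕ) : ℤ) x := hf₀.trans_le h
  have hc := log_chain hx ξ A l r hT
  set T := eSym A ((l + r : ℕ) : ℤ) x
  set T1 := eSymD A ((l + r : ℕ) : ℤ) x ξ
  set T2 := eSymDD A ((l + r : ℕ) : ℤ) x ξ
  set w := eSymD A (l : ℤ) x ξ / eSym A (l : ℤ) x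
  set z := eSymDD A (l : ℤ) x ξ / eSym A (l : ℤ) x
  obtain ⟨v, hv⟩ : ∃ v, v = T1 / T := ⟨_, rfl⟩
  obtain ⟨y, hy⟩ : ∃ y, y = T2 / T := ⟨_, rfl⟩
  rw [← hv, ← hy] at hc
  have hT1 : T1 = T * v := by rw [hv]; field_simp
  have hT2 : T2 = T * y := by rw [hy]; field_simp
  have hr : (0 : ℝ) < r := by exact_mod_cast (show 0 < r by omega)
  have hrn : (r : ℝ) ≤ n := by exact_mod_cast (show r ≤ n by omega)
  have hn : (1 : ℝ) ≤ n := by exact_mod_cast (show 1 ≤ n by omega)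
  have h1 : (v - w) ^ 2 / n ≤ (v - w) ^ 2 / r := by gcongr
  have h2 : 1 / (2 * (n : ℝ)) * w ^ 2 ≤ (v - w) ^ 2 / n + v ^ 2 / n := by
    rw [show 1 / (2 * (n : ℝ)) * w ^ 2 = (w ^ 2 / 2) / n by field_simp, ← add_div]
    gcongr
    nlinarith [sq_nonneg (2 * v - w)]
  have h3 : v ^ 2 / n ≤ v ^ 2 := div_le_self (sq_nonneg v) hn
  have h4 : T * (2 * v ^ 2) ≤ 2 / f₀ * (T * v) ^ 2 := by
    rw [div_mul_eq_mul_div, le_div_iff₀ hf₀]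
    nlinarith [mul_le_mul_of_nonneg_left h (show 0 ≤ T * (2 * v ^ 2) by positivity)]
  rw [hT1, hT2]
  have h5 : (1 + 1 / (2 * (n : ℝ))) * w ^ 2 - z ≤ 2 * v ^ 2 - y := by nlinarith
  nlinarith [mul_le_mul_of_nonneg_left h5 hT.le]

end Chain

/-! ### Size estimates when few entries are large -/

section Size

variable {ι : Type*} [DecidableEq ι] {x : ι → ℝ}

lemma eSym_le (hx : ∀ i, 0 ≤ x i) {M : ℝ} (hM : 0 < M) (hxM : ∀ i, x i ≤ M) {A : Finset ι}
    {n : ℕ} (hA : A.card ≤ n) (m j : ℕ) :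
    M ^ j * eSym A ((m : ℤ) - j) x ≤ 2 ^ n * M ^ m := by
  by_cases hj : j ≤ m
  · obtain ⟨r, rfl⟩ : ∃ r, m = j + r := ⟨m - j, by omega⟩
    rw [show ((j + r : ℕ) : ℤ) - j = (r : ℤ) by push_cast; ring, eSym_natCast]
    have h1 : ∑ s ∈ Finset.powersetCard r A, ∏ i ∈ s, x i
        ≤ ∑ s ∈ Finset.powersetCard r A, M ^ r := by
      refine Finset.sum_le_sum fun s hs => ?_
      rw [← (Finset.mem_powersetCard.1 hs).2, ← Finset.prod_const]
      exact Finset.prod_le_prod (fun i _ => hx i) fun i _ => hxM i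
    rw [Finset.sum_const, Finset.card_powersetCard, nsmul_eq_mul] at h1
    have h2 : (A.card.choose r : ℝ) ≤ 2 ^ n := by
      exact_mod_cast (Nat.choose_le_two_pow _ _).trans (Nat.pow_le_pow_right (by norm_num) hA)
    calc _ ≤ M ^ j * (2 ^ n * M ^ r) := by
          refine mul_le_mul_of_nonneg_left (h1.trans ?_) (by positivity)
          exact mul_le_mul_of_nonneg_right h2 (by positivity)
      _ = _ := by ring
  · rw [eSym_of_neg _ (by omega)]
    simp only [mul_zero]
    positivity

/-- If fewer than `m` entries are large, each monomial of `σ_m` contains a small entry. -/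
lemma eSym_union_le (hx : ∀ i, 0 ≤ x i) {ρ : ℝ} {m : ℕ} (U T : Finset ι)
    (hU : U.card < m) (hT : ∀ i ∈ T, x i ≤ ρ) (hd : Disjoint U T) :
    eSym (U ∪ T) (m : ℤ) x ≤ T.card * ρ * eSym (U ∪ T) ((m : ℤ) - 1) x := by
  induction T using Finset.induction_on with
  | empty => simp [eSym_natCast, Finset.powersetCard_eq_empty.2 hU]
  | insert a T ha ih =>
    have haU : a ∉ U := fun h =>
      Finset.disjoint_left.1 hd h (Finset.mem_insert_self a T)
    have h1 := ih (fun i hi => hT i (Finset.mem_insert_of_mem hi))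
      (hd.mono_right (Finset.subset_insert a T))
    have haT := hT a (Finset.mem_insert_self a T)
    have h0 : 0 ≤ ρ := (hx a).trans haT
    have hmono : eSym (U ∪ T) ((m : ℤ) - 1) x ≤ eSym (U ∪ insert a T) ((m : ℤ) - 1) x :=
      eSym_mono hx (Finset.union_subset_union_right (Finset.subset_insert a T)) _
    have hn := eSym_nonneg hx (U ∪ T) ((m : ℤ) - 1)
    have hrec : eSym (U ∪ insert a T) (m : ℤ) x
        = x a * eSym (U ∪ T) ((m : ℤ) - 1) x + eSym (U ∪ T) (m : ℤ) x := by
      rw [Finset.union_insert, eSym_insert (by simp [haU, ha])]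
    rw [hrec, Finset.card_insert_of_notMem ha]
    push_cast
    calc _ ≤ ρ * eSym (U ∪ T) ((m : ℤ) - 1) x + T.card * ρ * eSym (U ∪ T) ((m : ℤ) - 1) x :=
          add_le_add (mul_le_mul_of_nonneg_right haT hn) h1
      _ = ((T.card : ℝ) + 1) * ρ * eSym (U ∪ T) ((m : ℤ) - 1) x := by ring
      _ ≤ _ := mul_le_mul_of_nonneg_left hmono (by positivity)

lemma eSym_le_of_few_large (hx : ∀ i, 0 ≤ x i) {ρ : ℝ} (hρ : 0 ≤ ρ) {m n : ℕ} (A b : Finset ι)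
    (hA : A.card ≤ n) (hb : (A ∩ b).card < m) (hs : ∀ i, i ∉ b → x i ≤ ρ / n) :
    eSym A (m : ℤ) x ≤ ρ * eSym A ((m : ℤ) - 1) x := by
  have h := eSym_union_le hx (ρ := ρ / n) (m := m) (A ∩ b) (A \ b) hb
    (fun i hi => hs i (Finset.mem_sdiff.1 hi).2) (Finset.disjoint_sdiff_inter A b).symm
  rw [Finset.union_comm, Finset.sdiff_union_inter] at h
  refine h.trans (mul_le_mul_of_nonneg_right ?_ (eSym_nonneg hx _ _))
  rcases Nat.eq_zero_or_pos n with rfl | hn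
  · simpa using hρ
  · have hn' : (0 : ℝ) < n := by exact_mod_cast hn
    have hc : ((A \ b).card : ℝ) ≤ n := by
      exact_mod_cast (Finset.card_le_card Finset.sdiff_subset).trans hA
    calc ((A \ b).card : ℝ) * (ρ / n) ≤ n * (ρ / n) := by gcongr
      _ = ρ := by field_simp

end Size

/-! ### Positivity of the limiting quadratic form -/

section QuadraticForm

/-- The quadratic form left after all reductions, in the coordinates `y = ξ / κ₁`. Here `b` is the
set of large indices, `Q p` and `R p q` are the normalised coefficients coming from `σ_Λ`, and
`H = κ₁ / κ_i`. The term `Q i ^ 2 * y i ^ 2` only matches `H ^ 2 * y i ^ 2` up to a small error,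
which is absorbed by the multiple of `(∑ Q p y p)²`. -/
lemma form_nonneg {n : ℕ} (i : Fin n) (b : Finset (Fin n)) (hi : i ∈ b) (y Q : Fin n → ℝ)
    (R : Fin n → Fin n → ℝ) {C c τ ρ δ H : ℝ} (hC : 1 ≤ C) (hc : 0 < c) (hc1 : c ≤ 1)
    (hτ : 0 < τ) (hτ1 : τ ≤ 1) (hρC : C * ρ ≤ 1 / 2) (hδ : 0 < δ)
    (hcC : c * (n * C ^ 2) = 1 / 8) (hτc : 2 * n * C ^ 2 * τ = c / 16)
    (hρc : 2 * C * ρ ≤ c / 16 * δ ^ 2) (hρτ : 1 / 8 + 2 * n * C ^ 2 / τ ≤ 1 / (2 * ρ))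
    (hH1 : 1 ≤ H) (hHδ : H * δ ≤ 1)
    (hQ0 : ∀ p, 0 ≤ Q p) (hQC : ∀ p, Q p ≤ C) (hQi : H * (1 - C * ρ) ≤ Q i)
    (hR : ∀ p q, |R p q| ≤ C ^ 2)
    (hRb : ∀ p ∈ b, ∀ q ∈ b, p ≠ q → |R p q| ≤ C ^ 2 * τ) :
    H ^ 2 * y i ^ 2 ≤ ∑ p, Q p ^ 2 * y p ^ 2 + ∑ p, ∑ q ∈ Finset.univ.erase p, R p q * y p * y q
      + 1 / (2 * n) * (∑ p, Q p * y p) ^ 2 + 1 / 2 * ∑ p ∈ b.erase i, y p ^ 2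
      + 1 / (2 * ρ) * ∑ p ∈ bᶜ, y p ^ 2 := by
  have hn : (1 : ℝ) ≤ n := by exact_mod_cast i.pos
  set X := y i ^ 2 with hX
  set Y := ∑ p ∈ b.erase i, y p ^ 2 with hY
  set Z := ∑ p ∈ bᶜ, y p ^ 2 with hZ
  have hX0 : 0 ≤ X := sq_nonneg _
  have hY0 : 0 ≤ Y := Finset.sum_nonneg fun p _ => sq_nonneg _
  have hZ0 : 0 ≤ Z := Finset.sum_nonneg fun p _ => sq_nonneg _
  have h1 : Q i ^ 2 * X ≤ ∑ p, Q p ^ 2 * y p ^ 2 :=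
    Finset.single_le_sum (f := fun p => Q p ^ 2 * y p ^ 2) (fun p _ => by positivity)
      (Finset.mem_univ i)
  -- Cross terms: weight `τ` on large indices and `1/τ` on small ones.
  have h2 : -(2 * n * C ^ 2 * (τ * (X + Y) + Z / τ))
      ≤ ∑ p, ∑ q ∈ Finset.univ.erase p, R p q * y p * y q := by
    let ω : Fin n → ℝ := fun p => if p ∈ b then τ else 1 / τ
    have hω0 : ∀ p, 0 ≤ ω p * y p ^ 2 := fun p => by
      refine mul_nonneg ?_ (sq_nonneg _)
      simp only [ω]
      split_ifs <;> positivity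
    have hωsum : ∑ p, ω p * y p ^ 2 = τ * (X + Y) + Z / τ := by
      rw [← Finset.sum_add_sum_compl b, ← Finset.add_sum_erase b _ hi]
      have e1 : ∑ p ∈ b.erase i, ω p * y p ^ 2 = τ * Y := by
        rw [hY, Finset.mul_sum]
        refine Finset.sum_congr rfl fun p hp => ?_
        simp [ω, Finset.mem_of_mem_erase hp]
      have e2 : ∑ p ∈ bᶜ, ω p * y p ^ 2 = Z / τ := by
        rw [hZ, Finset.sum_div]
        refine Finset.sum_congr rfl fun p hp => ?_
        simp only [ω, Finset.mem_compl.1 hp, if_false]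
        ring
      rw [e1, e2]
      simp only [ω, hi, if_true]
      ring
    have hτinv : 1 ≤ 1 / τ := by rw [le_div_iff₀ hτ]; linarith
    have hmix : ∀ s t : ℝ, |s * t| ≤ τ * s ^ 2 + 1 / τ * t ^ 2 := by
      intro s t
      have e : τ * s ^ 2 + 1 / τ * t ^ 2 - |s * t|
          = (1 / τ) * ((τ * |s| - |t| / 2) ^ 2 + 3 / 4 * |t| ^ 2) := by
        rw [abs_mul, ← sq_abs s, ← sq_abs t]
        field_simp
        ring
      have : 0 ≤ (1 / τ) * ((τ * |s| - |t| / 2) ^ 2 + 3 / 4 * |t| ^ 2) := by positivity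
      linarith
    have hC2 : 0 ≤ C ^ 2 := sq_nonneg C
    have hyy : ∀ s t : ℝ, |s * t| ≤ s ^ 2 + t ^ 2 := by
      intro s t
      rw [abs_le]
      constructor <;> nlinarith [sq_nonneg (s + t), sq_nonneg (s - t)]
    have hterm : ∀ p q, q ≠ p →
        -(C ^ 2 * (ω p * y p ^ 2 + ω q * y q ^ 2)) ≤ R p q * y p * y q := by
      intro p q hqp
      have habs : |R p q * y p * y q| ≤ C ^ 2 * (ω p * y p ^ 2 + ω q * y q ^ 2) := by
        rw [mul_assoc, abs_mul]
        by_cases hp : p ∈ b <;> by_cases hq : q ∈ b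
        · simp only [ω, hp, hq, if_true]
          calc _ ≤ (C ^ 2 * τ) * (y p ^ 2 + y q ^ 2) :=
                mul_le_mul (hRb p hp q hq hqp.symm) (hyy _ _) (abs_nonneg _) (by positivity)
            _ = _ := by ring
        · simp only [ω, hp, hq, if_true, if_false]
          exact mul_le_mul (hR p q) (hmix _ _) (abs_nonneg _) hC2
        · simp only [ω, hp, hq, if_true, if_false]
          refine mul_le_mul (hR p q) ?_ (abs_nonneg _) hC2
          rw [mul_comm (y p), add_comm]
          exact hmix _ _
        · simp only [ω, hp, hq, if_false]
          refine mul_le_mul (hR p q) ((hyy _ _).trans ?_) (abs_nonneg _) hC2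
          nlinarith [sq_nonneg (y p), sq_nonneg (y q)]
      exact (abs_le.1 habs).1
    calc -(2 * n * C ^ 2 * (τ * (X + Y) + Z / τ))
        = -∑ p, ∑ q, C ^ 2 * (ω p * y p ^ 2 + ω q * y q ^ 2) := by
          rw [← hωsum]
          simp only [← Finset.mul_sum, Finset.sum_add_distrib, Finset.sum_const,
            Finset.card_univ, Fintype.card_fin, nsmul_eq_mul]
          rw [show ∑ p, ω p * (n * y p ^ 2) = n * ∑ p, ω p * y p ^ 2 by
            rw [Finset.mul_sum]; exact Finset.sum_congr rfl fun p _ => by ring]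
          ring
      _ ≤ -∑ p, ∑ q ∈ Finset.univ.erase p, C ^ 2 * (ω p * y p ^ 2 + ω q * y q ^ 2) := by
          refine neg_le_neg (Finset.sum_le_sum fun p _ => ?_)
          exact Finset.sum_le_sum_of_subset_of_nonneg (Finset.erase_subset _ _)
            fun q _ _ => mul_nonneg hC2 (add_nonneg (hω0 p) (hω0 q))
      _ ≤ _ := by
          simp only [← Finset.sum_neg_distrib]
          exact Finset.sum_le_sum fun p _ => Finset.sum_le_sum fun q hq =>
            hterm p q (Finset.ne_of_mem_erase hq)
  have hYZ : ∑ p ∈ Finset.univ.erase i, y p ^ 2 = Y + Z := by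
    have e1 := Finset.sum_add_sum_compl b fun p => y p ^ 2
    have e2 := Finset.add_sum_erase b (fun p => y p ^ 2) hi
    have e3 := Finset.add_sum_erase Finset.univ (fun p => y p ^ 2) (Finset.mem_univ i)
    linarith
  have h3 : Q i ^ 2 * X / 2 - n * C ^ 2 * (Y + Z) ≤ (∑ p, Q p * y p) ^ 2 := by
    rw [← Finset.add_sum_erase Finset.univ (fun p => Q p * y p) (Finset.mem_univ i)]
    set r := ∑ p ∈ Finset.univ.erase i, Q p * y p with hr
    have hr2 : r ^ 2 ≤ n * C ^ 2 * (Y + Z) := by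
      calc r ^ 2 ≤ ((Finset.univ.erase i).card : ℝ) * ∑ p ∈ Finset.univ.erase i, (Q p * y p) ^ 2 :=
            sq_sum_le_card_mul_sum_sq
        _ ≤ n * ∑ p ∈ Finset.univ.erase i, C ^ 2 * y p ^ 2 := by
            refine mul_le_mul ?_ ?_ (Finset.sum_nonneg fun p _ => sq_nonneg _) (by positivity)
            · have : (Finset.univ.erase i).card ≤ n :=
                (Finset.card_le_univ _).trans (by simp)
              exact_mod_cast this
            · refine Finset.sum_le_sum fun p _ => ?_
              rw [mul_pow]
              have := hQ0 p
              have := hQC p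
              gcongr
        _ = _ := by rw [← Finset.mul_sum, hYZ]; ring
    rw [hX]
    nlinarith [sq_nonneg (Q i * y i + 2 * r)]
  have hcn : c ≤ 1 / (2 * n) := by
    rw [le_div_iff₀ (by positivity)]
    have : c * n ≤ c * (n * C ^ 2) := by
      have : (1 : ℝ) ≤ C ^ 2 := one_le_pow₀ hC
      have : (n : ℝ) ≤ n * C ^ 2 := le_mul_of_one_le_right (by positivity) this
      gcongr
    linarith
  have h4 : c * (Q i ^ 2 * X / 2 - n * C ^ 2 * (Y + Z))
      ≤ 1 / (2 * n) * (∑ p, Q p * y p) ^ 2 :=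
    (mul_le_mul_of_nonneg_left h3 hc.le).trans (mul_le_mul_of_nonneg_right hcn (sq_nonneg _))
  have hQi2 : H ^ 2 * (1 - 2 * (C * ρ)) ≤ Q i ^ 2 := by
    have : (H * (1 - C * ρ)) ^ 2 ≤ Q i ^ 2 := by
      have : 0 ≤ 1 - C * ρ := by linarith
      gcongr
    refine le_trans ?_ this
    rw [mul_pow]
    refine mul_le_mul_of_nonneg_left ?_ (sq_nonneg H)
    linarith [sq_nonneg (C * ρ), show (1 - C * ρ) ^ 2 = 1 - 2 * (C * ρ) + (C * ρ) ^ 2 by ring]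
  have hQhalf : 1 / 4 ≤ Q i ^ 2 := by
    have hh : 1 / 2 ≤ Q i :=
      calc (1 : ℝ) / 2 = 1 * (1 / 2) := by ring
        _ ≤ H * (1 - C * ρ) :=
            mul_le_mul hH1 (by linarith) (by norm_num) (by linarith)
        _ ≤ Q i := hQi
    calc (1 : ℝ) / 4 = (1 / 2) ^ 2 := by norm_num
      _ ≤ Q i ^ 2 := pow_le_pow_left₀ (by norm_num) hh 2
  have hHc : H ^ 2 * (2 * (C * ρ)) ≤ c / 16 := by
    calc H ^ 2 * (2 * (C * ρ)) = H ^ 2 * (2 * C * ρ) := by ring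
      _ ≤ H ^ 2 * (c / 16 * δ ^ 2) := by gcongr
      _ = c / 16 * (H * δ) ^ 2 := by ring
      _ ≤ c / 16 * 1 := by
          gcongr
          exact pow_le_one₀ (by positivity) hHδ
      _ = c / 16 := by ring
  have h5 : (H ^ 2 - c / 16) * X ≤ Q i ^ 2 * X :=
    mul_le_mul_of_nonneg_right (by linarith) hX0
  have h6 : c * (Q i ^ 2 * X / 2 - n * C ^ 2 * (Y + Z)) ≥ c / 8 * X - 1 / 8 * (Y + Z) := by
    have : c * (Q i ^ 2 * X / 2 - n * C ^ 2 * (Y + Z))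
        = c / 2 * (Q i ^ 2 * X) - c * (n * C ^ 2) * (Y + Z) := by ring
    rw [this, hcC]
    have := mul_le_mul_of_nonneg_left (mul_le_mul_of_nonneg_right hQhalf hX0)
      (show 0 ≤ c / 2 by positivity)
    linarith
  have h7 : 2 * n * C ^ 2 * (τ * (X + Y) + Z / τ)
      = c / 16 * (X + Y) + 2 * n * C ^ 2 / τ * Z := by
    rw [← hτc]; ring
  rw [h7] at h2
  have h8 := mul_le_mul_of_nonneg_right hρτ hZ0
  have h9 : c / 16 * Y ≤ 1 / 16 * Y := by gcongr
  linarith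

end QuadraticForm

/-! ### Reduction to `σ_Λ` and conclusion -/

section Assembly

/-- Lower bound for the contribution of `σ_l` when `κ` splits into `l` large entries, indexed by
`b`, and `n - l` entries of size at most `ρ M / n`. -/
lemma sigma_form {n l : ℕ} (hl : 1 ≤ l) (i : Fin n) (b : Finset (Fin n)) (hbl : b.card = l)
    (hi : i ∈ b) {κ : Fin n → ℝ} (ξ : Fin n → ℝ) (hκ : ∀ p, 0 ≤ κ p) {M : ℝ} (hM : 0 < M)
    (hκM : ∀ p, κ p ≤ M)
    {C c τ ρ δ : ℝ} (hδ : 0 < δ) (hδ1 : δ ≤ 1) (hCδ : C * δ ^ n = 2 ^ n)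
    (hbig : ∀ p ∈ b, δ * M ≤ κ p) (hsmall : ∀ p, p ∉ b → κ p ≤ ρ * M / n)
    (hC : 1 ≤ C) (hc : 0 < c) (hc1 : c ≤ 1)
    (hτ : 0 < τ) (hτ1 : τ ≤ 1) (hρ : 0 < ρ) (hρ1 : ρ ≤ τ) (hρC : C * ρ ≤ 1 / 2)
    (hcC : c * (n * C ^ 2) = 1 / 8) (hτc : 2 * n * C ^ 2 * τ = c / 16)
    (hρc : 2 * C * ρ ≤ c / 16 * δ ^ 2) (hρτ : 1 / 8 + 2 * n * C ^ 2 / τ ≤ 1 / (2 * ρ)) :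
    ξ i ^ 2 / κ i ^ 2 ≤
      ((1 + 1 / (2 * n)) * (eSymD Finset.univ l κ ξ / eSym Finset.univ l κ) ^ 2
        - eSymDD Finset.univ l κ ξ / eSym Finset.univ l κ)
      + 1 / 2 * (∑ p ∈ b.erase i, ξ p ^ 2) / M ^ 2
      + 1 / (2 * ρ) * (∑ p ∈ bᶜ, ξ p ^ 2) / M ^ 2 := by
  have hcard : ∀ A : Finset (Fin n), A.card ≤ n := fun A =>
    (Finset.card_le_univ A).trans (by simp)
  have hκi : 0 < κ i := (mul_pos hδ hM).trans_le (hbig i hi)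
  have hρM : 0 ≤ ρ * M := by positivity
  set σ := eSym Finset.univ (l : ℤ) κ with hσdef
  have hσ : 2 ^ n * M ^ l ≤ C * σ := by
    have h1 : ∏ p ∈ b, κ p ≤ σ := by
      rw [hσdef, eSym_natCast]
      exact Finset.single_le_sum (f := fun s => ∏ p ∈ s, κ p)
        (fun s _ => Finset.prod_nonneg fun p _ => hκ p)
        (Finset.mem_powersetCard.2 ⟨Finset.subset_univ b, hbl⟩)
    have h2 : (δ * M) ^ l ≤ ∏ p ∈ b, κ p := by
      rw [← hbl, ← Finset.prod_const]
      exact Finset.prod_le_prod (fun p _ => by positivity) hbig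
    have h3 : δ ^ n ≤ δ ^ l := pow_le_pow_of_le_one hδ.le hδ1 (hbl ▸ hcard b)
    calc 2 ^ n * M ^ l = C * (δ ^ n * M ^ l) := by rw [← hCδ]; ring
      _ ≤ C * (δ ^ l * M ^ l) := by gcongr
      _ = C * (δ * M) ^ l := by rw [mul_pow]
      _ ≤ C * σ := by
          have := h2.trans h1
          gcongr
  have hσ0 : 0 < σ := by
    have : 0 < C * σ := lt_of_lt_of_le (by positivity) hσ
    exact pos_of_mul_pos_right this (by linarith)
  have hb1 : ∀ A : Finset (Fin n), M * eSym A ((l : ℤ) - 1) κ ≤ C * σ := fun A => by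
    have := eSym_le hκ hM hκM (hcard A) l 1
    rw [pow_one] at this
    exact this.trans hσ
  have hb2 : ∀ A : Finset (Fin n), M ^ 2 * eSym A ((l : ℤ) - 2) κ ≤ C * σ := fun A =>
    (eSym_le hκ hM hκM (hcard A) l 2).trans hσ
  let Q : Fin n → ℝ := fun p => M * eSym (Finset.univ.erase p) ((l : ℤ) - 1) κ / σ
  let W : Fin n → Fin n → ℝ := fun p q =>
    M ^ 2 * eSym ((Finset.univ.erase p).erase q) ((l : ℤ) - 2) κ / σ
  have hQ0 : ∀ p, 0 ≤ Q p := fun p =>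
    div_nonneg (mul_nonneg hM.le (eSym_nonneg hκ _ _)) hσ0.le
  have hQC : ∀ p, Q p ≤ C := fun p => by
    rw [div_le_iff₀ hσ0]
    exact hb1 _
  have hW0 : ∀ p q, 0 ≤ W p q := fun p q =>
    div_nonneg (mul_nonneg (sq_nonneg M) (eSym_nonneg hκ _ _)) hσ0.le
  have hWC : ∀ p q, W p q ≤ C := fun p q => by
    rw [div_le_iff₀ hσ0]
    exact hb2 _
  have hCC : C ≤ C ^ 2 := by nlinarith
  have hR : ∀ p q, |Q p * Q q - W p q| ≤ C ^ 2 := by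
    intro p q
    have h1 : Q p * Q q ≤ C ^ 2 := by
      rw [sq]
      exact mul_le_mul (hQC p) (hQC q) (hQ0 q) (by linarith)
    have h2 := mul_nonneg (hQ0 p) (hQ0 q)
    rw [abs_le]
    constructor <;> linarith [hW0 p q, hWC p q]
  -- For two large indices the leading parts of `Q p * Q q` and `W p q` cancel.
  have hRb : ∀ p ∈ b, ∀ q ∈ b, p ≠ q → |Q p * Q q - W p q| ≤ C ^ 2 * τ := by
    intro p hp q hq hpq
    have hqp : q ∈ Finset.univ.erase p := Finset.mem_erase.2 ⟨hpq.symm, Finset.mem_univ q⟩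
    have hpq' : p ∈ Finset.univ.erase q := Finset.mem_erase.2 ⟨hpq, Finset.mem_univ p⟩
    set A := (Finset.univ.erase p).erase q with hA
    have hcardA : (A ∩ b).card = l - 1 - 1 := by
      have : A ∩ b = (b.erase p).erase q := by
        ext r
        simp only [hA, Finset.mem_inter, Finset.mem_erase, Finset.mem_univ]
        tauto
      rw [this, Finset.card_erase_of_mem (Finset.mem_erase.2 ⟨hpq.symm, hq⟩),
        Finset.card_erase_of_mem hp, hbl]
    have hl2 : 2 ≤ l := by
      rw [← hbl, ← Finset.card_pair hpq]
      refine Finset.card_le_card fun r hr => ?_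
      rcases Finset.mem_insert.1 hr with rfl | hr
      · exact hp
      · rw [Finset.mem_singleton.1 hr]; exact hq
    have s1 : (l : ℤ) - 1 - 1 = (l : ℤ) - 2 := by ring
    have e1 := eSym_erase hqp ((l : ℤ) - 1) κ
    have e2 := eSym_erase hpq' ((l : ℤ) - 1) κ
    have e3 := eSym_erase (Finset.mem_univ p) (l : ℤ) κ
    have e4 := eSym_erase hqp (l : ℤ) κ
    rw [Finset.erase_right_comm] at e2
    rw [← hA, s1] at e1 e2
    rw [← hA] at e4
    have f1 := eSym_le_of_few_large hκ hρM (m := l - 1) A b (hcard A) (by omega) hsmall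
    have f2 := eSym_le_of_few_large hκ hρM (m := l) A b (hcard A) (by omega) hsmall
    rw [show ((l - 1 : ℕ) : ℤ) = (l : ℤ) - 1 by omega, s1] at f1
    have g1 := hb1 A
    have g2 := hb2 A
    have n0 := eSym_nonneg hκ A (l : ℤ)
    have n1 := eSym_nonneg hκ A ((l : ℤ) - 1)
    have n2 := eSym_nonneg hκ A ((l : ℤ) - 2)
    have hval : Q p * Q q - W p q = M ^ 2 * (eSym A ((l : ℤ) - 1) κ ^ 2
        - eSym A ((l : ℤ) - 2) κ * eSym A (l : ℤ) κ) / σ ^ 2 := by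
      simp only [Q, W]
      rw [← hA, e1, e2]
      field_simp
      rw [hσdef, e3, e4, e1]
      ring
    set u := eSym A ((l : ℤ) - 1) κ
    set v := eSym A ((l : ℤ) - 2) κ
    set d := eSym A (l : ℤ) κ
    have k1 : M * u ≤ ρ * (C * σ) :=
      calc M * u ≤ M * (ρ * M * v) := by gcongr
        _ = ρ * (M ^ 2 * v) := by ring
        _ ≤ ρ * (C * σ) := by gcongr
    have k2 : d ≤ ρ * (C * σ) :=
      calc d ≤ ρ * M * u := f2
        _ = ρ * (M * u) := by ring
        _ ≤ ρ * (C * σ) := by gcongr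
    have hCσ : 0 ≤ C * σ := by positivity
    have k3 : (M * u) ^ 2 ≤ C ^ 2 * τ * σ ^ 2 :=
      calc (M * u) ^ 2 = (M * u) * (M * u) := sq _
        _ ≤ (ρ * (C * σ)) * (C * σ) := mul_le_mul k1 g1 (by positivity) (by positivity)
        _ = ρ * (C * σ) ^ 2 := by ring
        _ ≤ τ * (C * σ) ^ 2 := by gcongr
        _ = _ := by ring
    have k4 : M ^ 2 * v * d ≤ C ^ 2 * τ * σ ^ 2 :=
      calc M ^ 2 * v * d ≤ (C * σ) * (ρ * (C * σ)) := mul_le_mul g2 k2 n0 (by positivity)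
        _ = ρ * (C * σ) ^ 2 := by ring
        _ ≤ τ * (C * σ) ^ 2 := by gcongr
        _ = _ := by ring
    have k5 : 0 ≤ M ^ 2 * v * d := by positivity
    have k6 : M ^ 2 * (u ^ 2 - v * d) = (M * u) ^ 2 - M ^ 2 * v * d := by ring
    rw [hval, abs_div, abs_of_pos (show 0 < σ ^ 2 by positivity),
      div_le_iff₀ (by positivity), k6, abs_le]
    constructor <;> linarith [sq_nonneg (M * u)]
  have hQi : M / κ i * (1 - C * ρ) ≤ Q i := by
    have e := eSym_erase (Finset.mem_univ i) (l : ℤ) κ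
    have f := eSym_le_of_few_large hκ hρM (m := l) (Finset.univ.erase i) b (hcard _) (by
      have : Finset.univ.erase i ∩ b = b.erase i := by
        ext r
        simp only [Finset.mem_inter, Finset.mem_erase, Finset.mem_univ]
        tauto
      rw [this, Finset.card_erase_of_mem hi, hbl]
      omega) hsmall
    have g := hb1 (Finset.univ.erase i)
    rw [← hσdef] at e
    simp only [Q]
    set u := eSym (Finset.univ.erase i) ((l : ℤ) - 1) κ
    have h1 : eSym (Finset.univ.erase i) (l : ℤ) κ ≤ ρ * (C * σ) :=
      calc _ ≤ ρ * M * u := f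
        _ = ρ * (M * u) := by ring
        _ ≤ ρ * (C * σ) := by gcongr
    rw [div_mul_eq_mul_div, div_le_div_iff₀ hκi hσ0, mul_assoc, mul_assoc]
    refine mul_le_mul_of_nonneg_left ?_ hM.le
    linarith
  have hH1 : 1 ≤ M / κ i := by
    rw [le_div_iff₀ hκi]
    linarith [hκM i]
  have hHδ : M / κ i * δ ≤ 1 := by
    rw [div_mul_eq_mul_div, div_le_one hκi]
    linarith [hbig i hi]
  have hform := form_nonneg i b hi (fun p => ξ p / M) Q (fun p q => Q p * Q q - W p q) hC hc hc1
    hτ hτ1 hρC hδ hcC hτc hρc hρτ hH1 hHδ hQ0 hQC hQi hR hRb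
  have t1 : ∑ p, Q p * (ξ p / M) = eSymD Finset.univ l κ ξ / σ := by
    rw [eSymD, Finset.sum_div]
    refine Finset.sum_congr rfl fun p _ => ?_
    simp only [Q]
    field_simp
  have t2 : ∑ p, Q p ^ 2 * (ξ p / M) ^ 2
        + ∑ p, ∑ q ∈ Finset.univ.erase p, (Q p * Q q - W p q) * (ξ p / M) * (ξ q / M)
      = (eSymD Finset.univ l κ ξ / σ) ^ 2 - eSymDD Finset.univ l κ ξ / σ := by
    have a1 : eSymDD Finset.univ l κ ξ / σ
        = ∑ p, ∑ q ∈ Finset.univ.erase p, W p q * (ξ p / M) * (ξ q / M) := by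
      rw [eSymDD, Finset.sum_div]
      refine Finset.sum_congr rfl fun p _ => ?_
      rw [Finset.sum_div]
      refine Finset.sum_congr rfl fun q _ => ?_
      simp only [W]
      field_simp
    rw [a1, ← t1, sq (∑ p, Q p * (ξ p / M)), Finset.sum_mul_sum, ← Finset.sum_add_distrib,
      ← Finset.sum_sub_distrib]
    refine Finset.sum_congr rfl fun p _ => ?_
    rw [← Finset.add_sum_erase Finset.univ (fun q => Q p * (ξ p / M) * (Q q * (ξ q / M)))
      (Finset.mem_univ p), add_sub_assoc, ← Finset.sum_sub_distrib]
    congr 1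
    · ring
    · exact Finset.sum_congr rfl fun q _ => by ring
  have t3 : ∀ s : Finset (Fin n), ∑ p ∈ s, (ξ p / M) ^ 2 = (∑ p ∈ s, ξ p ^ 2) / M ^ 2 := by
    intro s
    rw [Finset.sum_div]
    exact Finset.sum_congr rfl fun p _ => div_pow _ _ _
  have t4 : (M / κ i) ^ 2 * (ξ i / M) ^ 2 = ξ i ^ 2 / κ i ^ 2 := by field_simp
  simp only [t2, t1, t3, t4] at hform
  rw [mul_div_assoc, mul_div_assoc]
  linarith

/-- The claim multiplied by `P`, with `D_i - E_i` replaced by its Cauchy–Schwarz lower bound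
`-σ_{k-1}(κ|i) |ξ|²`, for large entries indexed by `b` and `K = 2 / f₀`. -/
lemma lemma18_core {n k l : ℕ} (hl : 1 ≤ l) (hlk : l < k) (hkn : k ≤ n) (i : Fin n)
    (b : Finset (Fin n)) (hbl : b.card = l)
    (hi : i ∈ b) {κ : Fin n → ℝ} (ξ : Fin n → ℝ) (hκ : ∀ p, 0 ≤ κ p) {M : ℝ} (hM : 0 < M)
    (hκM : ∀ p, κ p ≤ M) {f₀ : ℝ} (hf₀ : 0 < f₀) (hf : f₀ ≤ eSym Finset.univ (k : ℤ) κ)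
    {C c τ ρ δ : ℝ} (hδ : 0 < δ) (hδ1 : δ ≤ 1) (hCδ : C * δ ^ n = 2 ^ n)
    (hbig : ∀ p ∈ b, δ * M ≤ κ p) (hsmall : ∀ p, p ∉ b → κ p ≤ ρ * M / n)
    (hC : 1 ≤ C) (hc : 0 < c) (hc1 : c ≤ 1)
    (hτ : 0 < τ) (hτ1 : τ ≤ 1) (hρ : 0 < ρ) (hρ1 : ρ ≤ τ) (hρC : C * ρ ≤ 1 / 2)
    (hcC : c * (n * C ^ 2) = 1 / 8) (hτc : 2 * n * C ^ 2 * τ = c / 16)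
    (hρc : 2 * C * ρ ≤ c / 16 * δ ^ 2) (hρτ : 1 / 8 + 2 * n * C ^ 2 / τ ≤ 1 / (2 * ρ)) :
    0 ≤ κ i * (2 / f₀ * eSymD Finset.univ (k : ℤ) κ ξ ^ 2 - eSymDD Finset.univ (k : ℤ) κ ξ)
      + 2 * ∑ j ∈ Finset.univ.erase i,
          κ j * eSym ((Finset.univ.erase i).erase j) ((k : ℤ) - 2) κ * ξ j ^ 2
      + 2 * ∑ j ∈ Finset.univ.erase i, eSym (Finset.univ.erase j) ((k : ℤ) - 1) κ * ξ j ^ 2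
      - eSym (Finset.univ.erase i) ((k : ℤ) - 1) κ * ∑ j, ξ j ^ 2 := by
  have hn : (1 : ℝ) ≤ n := by exact_mod_cast i.pos
  have hcard : ∀ A : Finset (Fin n), A.card ≤ n := fun A =>
    (Finset.card_le_univ A).trans (by simp)
  have hκi : 0 < κ i := (mul_pos hδ hM).trans_le (hbig i hi)
  have hρM : 0 ≤ ρ * M := by positivity
  have hA := second_derivative_bound hκ ξ Finset.univ hlk hkn hf₀ hf
  have hS := sigma_form hl i b hbl hi ξ hκ hM hκM hδ hδ1 hCδ hbig hsmall hC hc hc1 hτ hτ1 hρ hρ1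
    hρC hcC hτc hρc hρτ
  have hT : 0 < eSym Finset.univ (k : ℤ) κ := hf₀.trans_le hf
  set T := eSym Finset.univ (k : ℤ) κ with hTdef
  set G := (1 + 1 / (2 * (n : ℝ))) * (eSymD Finset.univ (l : ℤ) κ ξ / eSym Finset.univ l κ) ^ 2
        - eSymDD Finset.univ (l : ℤ) κ ξ / eSym Finset.univ l κ
  set s : Fin n → ℝ := fun j => eSym (Finset.univ.erase j) ((k : ℤ) - 1) κ with hs
  have hs0 : ∀ j, 0 ≤ s j := fun j => eSym_nonneg hκ _ _
  -- Since `k > l`, every monomial of `σ_k` contains a small entry.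
  have hTs : ∀ j, T ≤ (κ j + ρ * M) * s j := by
    intro j
    have e := eSym_erase (Finset.mem_univ j) (k : ℤ) κ
    have f := eSym_le_of_few_large hκ hρM (m := k) (Finset.univ.erase j) b (hcard _)
      ((Finset.card_le_card Finset.inter_subset_right).trans_lt (hbl ▸ hlk)) hsmall
    rw [← hTdef] at e
    simp only [hs]
    linarith
  have hsi : κ i * s i ≤ T := by
    have e := eSym_erase (Finset.mem_univ i) (k : ℤ) κ
    have := eSym_nonneg hκ (Finset.univ.erase i) (k : ℤ)
    rw [← hTdef] at e
    simp only [hs]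
    linarith
  have hsbig : ∀ j, T / (2 * M) ≤ s j := fun j => by
    rw [div_le_iff₀ (by positivity)]
    refine (hTs j).trans ?_
    have h1 : κ j + ρ * M ≤ 2 * M := by
      have : ρ * M ≤ 1 * M := by
        have := hρ1.trans hτ1
        gcongr
      linarith [hκM j]
    calc _ ≤ 2 * M * s j := mul_le_mul_of_nonneg_right h1 (hs0 j)
      _ = _ := by ring
  have hssmall : ∀ j, j ∉ b → T / (2 * ρ * M) ≤ s j := fun j hj => by
    rw [div_le_iff₀ (by positivity)]
    refine (hTs j).trans ?_
    have h1 : κ j + ρ * M ≤ 2 * ρ * M := by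
      have : ρ * M / n ≤ ρ * M := div_le_self hρM hn
      linarith [hsmall j hj]
    calc _ ≤ 2 * ρ * M * s j := mul_le_mul_of_nonneg_right h1 (hs0 j)
      _ = _ := by ring
  have hpair : ∀ j ∈ Finset.univ.erase i, s i + s j
      ≤ 2 * (κ j * eSym ((Finset.univ.erase i).erase j) ((k : ℤ) - 2) κ) + 2 * s j := by
    intro j hj
    have hij : i ∈ Finset.univ.erase j :=
      Finset.mem_erase.2 ⟨(Finset.ne_of_mem_erase hj).symm, Finset.mem_univ i⟩
    have e1 := eSym_erase hj ((k : ℤ) - 1) κ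
    have e2 := eSym_erase hij ((k : ℤ) - 1) κ
    rw [Finset.erase_right_comm] at e2
    rw [show (k : ℤ) - 1 - 1 = (k : ℤ) - 2 by ring] at e1 e2
    have n1 := mul_nonneg (hκ i) (eSym_nonneg hκ ((Finset.univ.erase i).erase j) ((k : ℤ) - 2))
    have n2 := mul_nonneg (hκ j) (eSym_nonneg hκ ((Finset.univ.erase i).erase j) ((k : ℤ) - 2))
    simp only [hs]
    linarith
  have hBC : ∑ j ∈ Finset.univ.erase i, (s i + s j) * ξ j ^ 2
      ≤ 2 * ∑ j ∈ Finset.univ.erase i,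
          κ j * eSym ((Finset.univ.erase i).erase j) ((k : ℤ) - 2) κ * ξ j ^ 2
      + 2 * ∑ j ∈ Finset.univ.erase i, s j * ξ j ^ 2 := by
    rw [Finset.mul_sum, Finset.mul_sum, ← Finset.sum_add_distrib]
    refine Finset.sum_le_sum fun j hj => ?_
    have := mul_le_mul_of_nonneg_right (hpair j hj) (sq_nonneg (ξ j))
    linarith
  have hD : s i * ∑ j, ξ j ^ 2 = s i * ξ i ^ 2 + ∑ j ∈ Finset.univ.erase i, s i * ξ j ^ 2 := by
    rw [← Finset.add_sum_erase Finset.univ (fun j => ξ j ^ 2) (Finset.mem_univ i), mul_add,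
      Finset.mul_sum]
  have hsplit : ∑ j ∈ Finset.univ.erase i, (s i + s j) * ξ j ^ 2
      = ∑ j ∈ Finset.univ.erase i, s i * ξ j ^ 2
        + (∑ j ∈ b.erase i, s j * ξ j ^ 2 + ∑ j ∈ bᶜ, s j * ξ j ^ 2) := by
    have e1 := Finset.sum_add_sum_compl b fun p => s p * ξ p ^ 2
    have e2 := Finset.add_sum_erase b (fun p => s p * ξ p ^ 2) hi
    have e3 := Finset.add_sum_erase Finset.univ (fun p => s p * ξ p ^ 2) (Finset.mem_univ i)
    simp only [add_mul, Finset.sum_add_distrib]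
    linarith
  have hY : T / (2 * M) * ∑ j ∈ b.erase i, ξ j ^ 2 ≤ ∑ j ∈ b.erase i, s j * ξ j ^ 2 := by
    rw [Finset.mul_sum]
    exact Finset.sum_le_sum fun j _ => mul_le_mul_of_nonneg_right (hsbig j) (sq_nonneg _)
  have hZ : T / (2 * ρ * M) * ∑ j ∈ bᶜ, ξ j ^ 2 ≤ ∑ j ∈ bᶜ, s j * ξ j ^ 2 := by
    rw [Finset.mul_sum]
    exact Finset.sum_le_sum fun j hj =>
      mul_le_mul_of_nonneg_right (hssmall j (Finset.mem_compl.1 hj)) (sq_nonneg _)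
  have hY0 : 0 ≤ ∑ j ∈ b.erase i, ξ j ^ 2 := Finset.sum_nonneg fun p _ => sq_nonneg _
  have hZ0 : 0 ≤ ∑ j ∈ bᶜ, ξ j ^ 2 := Finset.sum_nonneg fun p _ => sq_nonneg _
  set Y := ∑ j ∈ b.erase i, ξ j ^ 2
  set Z := ∑ j ∈ bᶜ, ξ j ^ 2
  have hX : s i * ξ i ^ 2 ≤ T * ξ i ^ 2 / κ i := by
    rw [le_div_iff₀ hκi]
    nlinarith [mul_le_mul_of_nonneg_right hsi (sq_nonneg (ξ i))]
  have hmain : T * ξ i ^ 2 / κ i ≤ κ i * (T * G) + T / (2 * M) * Y + T / (2 * ρ * M) * Z := by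
    have h1 := mul_le_mul_of_nonneg_left hS (mul_pos hκi hT).le
    have e0 : κ i * T * (ξ i ^ 2 / κ i ^ 2) = T * ξ i ^ 2 / κ i := by field_simp
    have hκ1 : κ i / M ≤ 1 := (div_le_one hM).2 (hκM i)
    have e1 : κ i * T * (1 / 2 * Y / M ^ 2) = κ i / M * (T / (2 * M) * Y) := by field_simp
    have e2 : κ i * T * (1 / (2 * ρ) * Z / M ^ 2) = κ i / M * (T / (2 * ρ * M) * Z) := by
      field_simp
    have i1 : κ i / M * (T / (2 * M) * Y) ≤ T / (2 * M) * Y :=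
      mul_le_of_le_one_left (by positivity) hκ1
    have i2 : κ i / M * (T / (2 * ρ * M) * Z) ≤ T / (2 * ρ * M) * Z :=
      mul_le_of_le_one_left (by positivity) hκ1
    rw [mul_add, mul_add, e0, e1, e2] at h1
    linarith
  have hA' := mul_le_mul_of_nonneg_left hA hκi.le
  change 0 ≤ _ + 2 * ∑ j ∈ Finset.univ.erase i, s j * ξ j ^ 2 - s i * ∑ j, ξ j ^ 2
  linarith

end Assembly

/-- Lemma 18. -/
theorem lemma18 (n k : ℕ) (hn : 2 ≤ n) (hk2 : 2 ≤ k) (hkn : k ≤ n)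
    (δ : ℝ) (hδ0 : 0 < δ) (hδ1 : δ ≤ 1) (f₀ : ℝ) (hf₀ : 0 < f₀) :
    ∃ K δ' : ℝ, 0 < K ∧ 0 < δ' ∧
      ∀ Λ : ℕ, ∀ _hΛ1 : 1 ≤ Λ, ∀ _hΛ2 : Λ ≤ k - 1,
      ∀ κ : Fin n → ℝ,
        (∀ i j : Fin n, i ≤ j → κ j ≤ κ i) → (∀ i : Fin n, 0 ≤ κ i) →
        f₀ ≤ esym (k : ℤ) κ →
        δ * κ ⟨0, by omega⟩ ≤ κ ⟨Λ - 1, by omega⟩ →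
        κ ⟨Λ, by omega⟩ ≤ δ' * κ ⟨0, by omega⟩ →
        ∀ i : Fin n, (i : ℕ) < Λ →
        ∀ ξ : Fin n → ℝ,
          0 ≤ (κ i / ∑ l : Fin n, κ l ^ 2) * (K * (esymDeriv (k : ℤ) κ ξ) ^ 2
                - ∑ p : Fin n, ∑ q ∈ Finset.univ.erase p,
                    esymD2 ((k : ℤ) - 2) κ p q * ξ p * ξ q)
              + (2 / ∑ l : Fin n, κ l ^ 2) * ∑ j ∈ Finset.univ.erase i,
                  κ j * esymD2 ((k : ℤ) - 2) κ i j * ξ j ^ 2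
              + (2 / ∑ l : Fin n, κ l ^ 2) * ∑ j ∈ Finset.univ.erase i,
                  esymD1 ((k : ℤ) - 1) κ j * ξ j ^ 2
              + (esymD1 ((k : ℤ) - 1) κ i / ∑ l : Fin n, κ l ^ 2) * ∑ j : Fin n, ξ j ^ 2
              - (2 * esymD1 ((k : ℤ) - 1) κ i / (∑ l : Fin n, κ l ^ 2) ^ 2)
                  * (∑ j : Fin n, κ j * ξ j) ^ 2 := by
  have hn0 : (1 : ℝ) ≤ n := by exact_mod_cast (show 1 ≤ n by omega)
  -- `C` bounds the normalised coefficients of `σ_Λ`; `c`, `τ`, `ρ` are chosen in this order, each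
  -- small compared with the previous ones, and `δ' = ρ / n`.
  obtain ⟨C, hCdef⟩ : ∃ C : ℝ, C = 2 ^ n / δ ^ n := ⟨_, rfl⟩
  have hCδ : C * δ ^ n = 2 ^ n := by rw [hCdef]; field_simp
  have hC : 1 ≤ C := by
    rw [hCdef, le_div_iff₀ (by positivity), one_mul]
    exact (pow_le_one₀ hδ0.le hδ1).trans (one_le_pow₀ (by norm_num))
  have hC0 : 0 < C := by linarith
  have hnC : 1 ≤ n * C ^ 2 := by
    have : (1 : ℝ) ≤ C ^ 2 := one_le_pow₀ hC
    nlinarith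
  obtain ⟨c, hcdef⟩ : ∃ c : ℝ, c = 1 / (8 * (n * C ^ 2)) := ⟨_, rfl⟩
  have hcC : c * (n * C ^ 2) = 1 / 8 := by rw [hcdef]; field_simp
  have hc : 0 < c := by rw [hcdef]; positivity
  have hc1 : c ≤ 1 / 8 := by nlinarith
  obtain ⟨τ, hτdef⟩ : ∃ τ : ℝ, τ = c / (32 * (n * C ^ 2)) := ⟨_, rfl⟩
  have hτc : 2 * n * C ^ 2 * τ = c / 16 := by rw [hτdef]; field_simp; norm_num
  have hτ : 0 < τ := by rw [hτdef]; positivity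
  have hτ1 : τ ≤ c / 32 := by
    have : 1 * τ ≤ n * C ^ 2 * τ := by gcongr
    linarith
  obtain ⟨ρ, hρdef⟩ : ∃ ρ : ℝ, ρ = τ ^ 2 * δ ^ 2 / C := ⟨_, rfl⟩
  have hρ : 0 < ρ := by rw [hρdef]; positivity
  have hCρ : C * ρ = τ ^ 2 * δ ^ 2 := by rw [hρdef]; field_simp
  have hδ2 : δ ^ 2 ≤ 1 := pow_le_one₀ hδ0.le hδ1
  have hτ2 : τ ^ 2 ≤ τ * (c / 32) := by rw [sq]; gcongr
  have hττ : τ ^ 2 ≤ τ := by nlinarith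
  have hCρ1 : C * ρ ≤ τ ^ 2 := by
    rw [hCρ]
    exact mul_le_of_le_one_right (sq_nonneg τ) hδ2
  have hρ1 : ρ ≤ τ ^ 2 := (le_mul_of_one_le_left hρ.le hC).trans hCρ1
  have hρc : 2 * C * ρ ≤ c / 16 * δ ^ 2 := by
    rw [mul_assoc, hCρ, ← mul_assoc]
    refine mul_le_mul_of_nonneg_right ?_ (sq_nonneg δ)
    nlinarith
  have hρτ : 1 / 8 + 2 * n * C ^ 2 / τ ≤ 1 / (2 * ρ) := by
    have e : 2 * n * C ^ 2 / τ = c / 16 / τ ^ 2 := by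
      rw [← hτc]; field_simp
    have h1 : 1 / (2 * τ ^ 2) ≤ 1 / (2 * ρ) := by gcongr
    have h2 : 1 / 8 + c / 16 / τ ^ 2 ≤ 1 / (2 * τ ^ 2) := by
      rw [show 1 / 8 + c / 16 / τ ^ 2 = (τ ^ 2 / 4 + c / 8) / (2 * τ ^ 2) by field_simp; ring]
      gcongr
      nlinarith
    rw [e]
    exact h2.trans h1
  refine ⟨2 / f₀, ρ / n, by positivity, by positivity, ?_⟩
  intro Λ hΛ1 hΛ2 κ hmono hκ hf hlarge hsml i hiΛ ξ
  have hf' : f₀ ≤ eSym Finset.univ (k : ℤ) κ := hf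
  set M := κ ⟨0, by omega⟩ with hMdef
  have hκM : ∀ p, κ p ≤ M := fun p => hmono _ p (Fin.mk_le_of_le_val (Nat.zero_le _))
  have hM : 0 < M := by
    refine (hκ _).lt_of_ne fun h0 => ?_
    have hz : ∀ p, κ p = 0 := fun p => le_antisymm (by rw [h0]; exact hκM p) (hκ p)
    have h1 : (0 : ℝ) < eSym Finset.univ ((1 : ℕ) : ℤ) κ :=
      eSym_pos_of_le hκ (by omega) (hf₀.trans_le hf')
    have h2 := eSym_euler Finset.univ ((1 : ℕ) : ℤ) κ
    simp [hz] at h2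
    simp [h2] at h1
  let b : Finset (Fin n) := Finset.univ.filter fun p => (p : ℕ) < Λ
  have hb : ∀ p, p ∈ b ↔ (p : ℕ) < Λ := fun p => by simp [b]
  have hbl : b.card = Λ := by
    simp only [b]
    rw [Fin.card_filter_val_lt]
    omega
  have hbig : ∀ p ∈ b, δ * M ≤ κ p := fun p hp =>
    hlarge.trans (hmono p _ (Fin.le_def.2 (by have := (hb p).1 hp; simp only; omega)))
  have hsmall : ∀ p, p ∉ b → κ p ≤ ρ * M / n := fun p hp => by
    have h1 := hmono ⟨Λ, by omega⟩ p
      (Fin.le_def.2 (by have := mt (hb p).2 hp; simp only; omega))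
    rw [mul_div_right_comm]
    exact h1.trans hsml
  have hcore := lemma18_core hΛ1 (by omega : Λ < k) hkn i b hbl ((hb i).2 hiΛ) ξ hκ hM hκM hf₀
    hf' hδ0 hδ1 hCδ hbig hsmall hC hc (by linarith) hτ (by linarith) hρ (hρ1.trans hττ)
    (by linarith) hcC hτc hρc hρτ
  have hP : 0 < ∑ l : Fin n, κ l ^ 2 :=
    lt_of_lt_of_le (by positivity : 0 < M ^ 2)
      (Finset.single_le_sum (f := fun l => κ l ^ 2) (fun l _ => sq_nonneg _) (Finset.mem_univ _))
  have hCS := Finset.sum_mul_sq_le_sq_mul_sq Finset.univ κ ξ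
  have hs0 : 0 ≤ esymD1 ((k : ℤ) - 1) κ i := eSym_nonneg hκ _ _
  change 0 ≤ κ i * (2 / f₀ * esymDeriv (k : ℤ) κ ξ ^ 2 - ∑ p : Fin n, ∑ q ∈ Finset.univ.erase p,
      esymD2 ((k : ℤ) - 2) κ p q * ξ p * ξ q)
    + 2 * ∑ j ∈ Finset.univ.erase i, κ j * esymD2 ((k : ℤ) - 2) κ i j * ξ j ^ 2
    + 2 * ∑ j ∈ Finset.univ.erase i, esymD1 ((k : ℤ) - 1) κ j * ξ j ^ 2
    - esymD1 ((k : ℤ) - 1) κ i * ∑ j, ξ j ^ 2 at hcore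
  set P := ∑ l : Fin n, κ l ^ 2
  set S := ∑ j : Fin n, ξ j ^ 2
  set N := ∑ j : Fin n, κ j * ξ j
  set s := esymD1 ((k : ℤ) - 1) κ i
  have hE : 2 * s / P ^ 2 * N ^ 2 ≤ 2 * s * S / P := by
    rw [div_mul_eq_mul_div, div_le_div_iff₀ (by positivity) hP]
    calc 2 * s * N ^ 2 * P = 2 * s * P * N ^ 2 := by ring
      _ ≤ 2 * s * P * (P * S) := mul_le_mul_of_nonneg_left hCS (by positivity)
      _ = 2 * s * S * P ^ 2 := by ring
  have hfin := div_nonneg hcore hP.le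
  refine hfin.trans (le_of_sub_nonneg ?_)
  refine (sub_nonneg.2 hE).trans (le_of_eq ?_)
  ring
end

section
/- Let n ≥ 2, let 2 ≤ m ≤ n be an integer, let κ ∈ ℝ^n, and let a ≠ b be two indices. Then σ_{m−1}(κ|a)·σ_{m−1}(κ|b) − σ_m(κ)·σ_{m−2}(κ|ab) = σ_{m−1}(κ|ab)² − σ_m(κ|ab)·σ_{m−2}(κ|ab), and this quantity is nonnegative. -/
/-!
Write `A` for the index set with `a` and `b` removed and `e_k` for the elementary symmetric
polynomials of `κ` on `A`. The equality follows by expanding every term over `A` with the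
recursion `e_k(A ∪ {i}) = e_k(A) + κ_i e_{k-1}(A)`.

The inequality `e_k e_{k+2} ≤ e_{k+1}²` is a weak form of Newton's inequality. The `e_k` are the
coefficients of `∏_{i ∈ A} (1 + κ_i X)`, which splits over `ℝ`. A polynomial `p` that splits over
`ℝ` satisfies Laguerre's inequality `p p'' ≤ p'²` pointwise, which at `0` reads
`2 p₀ p₂ ≤ p₁²`. By Rolle's theorem the derivatives of `p` split as well, and applying the
inequality to them gives `(k + 2) p_k p_{k+2} ≤ (k + 1) p_{k+1}²`.
-/

open Finset

open Polynomial in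
/-- Laguerre's inequality for real-rooted polynomials. -/
lemma laguerre_inequality {p : ℝ[X]} (hp : p.Splits) (x : ℝ) :
    p.eval x * p.derivative.derivative.eval x ≤ p.derivative.eval x ^ 2 := by
  have key : ∀ s : Multiset ℝ, ∀ q : ℝ[X], q = (s.map fun r => X - C r).prod →
      q.eval x * q.derivative.derivative.eval x ≤ q.derivative.eval x ^ 2 := by
    intro s
    induction s using Multiset.induction_on with
    | empty => rintro q rfl; simp
    | cons c s ih =>
      rintro q rfl
      have h := ih _ rfl
      rw [Multiset.map_cons, Multiset.prod_cons]
      generalize (s.map fun r => X - C r).prod = q at h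
      simp only [derivative_mul, derivative_sub, derivative_X, derivative_C, derivative_add,
        eval_add, eval_mul, eval_sub, eval_X, eval_C, sub_zero, one_mul]
      -- With `p = (X - c) q`, one has `p'² - p p'' = q² + (x - c)² (q'² - q q'')`.
      nlinarith [sq_nonneg (q.eval x), mul_nonneg (sq_nonneg (x - c)) (sub_nonneg.2 h)]
  have h := key p.roots _ rfl
  rw [hp.eq_prod_roots]
  generalize (p.roots.map fun r => X - C r).prod = q at h
  simp only [derivative_C_mul, eval_mul, eval_C]
  nlinarith [mul_nonneg (sq_nonneg p.leadingCoeff) (sub_nonneg.2 h)]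

open Polynomial in
/-- By Rolle's theorem, the derivative of a real-rooted polynomial is real-rooted. -/
lemma splits_derivative_of_splits {p : ℝ[X]} (hp : p.Splits) : p.derivative.Splits := by
  rw [splits_iff_card_roots] at hp ⊢
  have h1 := card_roots_le_derivative p
  have h2 := p.derivative.card_roots'
  have h3 := natDegree_derivative_le p
  rcases Nat.eq_zero_or_pos p.natDegree with h0 | h0
  · omega
  · omega

open Polynomial in
/-- Newton's inequality for the coefficients of a real-rooted polynomial, with a constant that does
not depend on the degree. -/
lemma coeff_newton_of_splits (k : ℕ) : ∀ {p : ℝ[X]}, p.Splits →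
    ((k : ℝ) + 2) * (p.coeff k * p.coeff (k + 2)) ≤ ((k : ℝ) + 1) * p.coeff (k + 1) ^ 2 := by
  induction k with
  | zero =>
    intro p hp
    have h := laguerre_inequality hp 0
    simp only [← coeff_zero_eq_eval_zero, coeff_derivative] at h
    norm_num at h ⊢
    linarith
  | succ k ih =>
    intro p hp
    have h := ih (splits_derivative_of_splits hp)
    simp only [coeff_derivative] at h
    push_cast at h ⊢
    -- Both sides of the inequality for `p'` carry the common factor `(k + 1) (k + 2)`.
    have hpos : (0 : ℝ) < (k + 1) * (k + 2) := by positivity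
    refine le_of_mul_le_mul_left ?_ hpos
    ring_nf at h ⊢
    linarith

lemma esymmOn_natCast_s13 {n : ℕ} (A : Finset (Fin n)) (k : ℕ) (x : Fin n → ℝ) :
    esymmOn A (k : ℤ) x = ∑ s ∈ Finset.powersetCard k A, ∏ i ∈ s, x i := by
  simp [esymmOn]

lemma esymmOn_zero {n : ℕ} (A : Finset (Fin n)) (x : Fin n → ℝ) :
    esymmOn A ((0 : ℕ) : ℤ) x = 1 := by
  simp [esymmOn]

lemma esymmOn_insert_succ {n : ℕ} {A : Finset (Fin n)} {a : Fin n} (ha : a ∉ A) (k : ℕ)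
    (x : Fin n → ℝ) :
    esymmOn (insert a A) ((k + 1 : ℕ) : ℤ) x
      = esymmOn A ((k + 1 : ℕ) : ℤ) x + x a * esymmOn A (k : ℤ) x := by
  have hmem : ∀ s ∈ Finset.powersetCard k A, a ∉ s := fun s hs h =>
    ha ((Finset.mem_powersetCard.1 hs).1 h)
  simp only [esymmOn_natCast_s13]
  rw [Finset.powersetCard_succ_insert ha, Finset.sum_union, Finset.sum_image, Finset.mul_sum]
  · congr 1
    exact Finset.sum_congr rfl fun s hs => Finset.prod_insert (hmem s hs)
  · intro s hs t ht hst
    rw [← Finset.erase_insert (hmem s hs), ← Finset.erase_insert (hmem t ht), hst]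
  · rw [Finset.disjoint_left]
    intro s hs hs'
    obtain ⟨t, -, rfl⟩ := Finset.mem_image.1 hs'
    exact ha ((Finset.mem_powersetCard.1 hs).1 (Finset.mem_insert_self a t))

open Polynomial in
lemma coeff_prod_eq_esymmOn {n : ℕ} (A : Finset (Fin n)) (x : Fin n → ℝ) (k : ℕ) :
    (∏ i ∈ A, (1 + C (x i) * X)).coeff k = esymmOn A (k : ℤ) x := by
  induction A using Finset.induction_on generalizing k with
  | empty =>
    cases k with
    | zero => simp [esymmOn]
    | succ k =>
      rw [esymmOn_natCast_s13, Finset.powersetCard_eq_empty.2 (by simp)]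
      simp [coeff_one]
  | insert a A ha ih =>
    rw [Finset.prod_insert ha, add_mul, one_mul, mul_assoc, coeff_add, coeff_C_mul]
    cases k with
    | zero => rw [coeff_X_mul_zero, ih, esymmOn_zero, esymmOn_zero]; simp
    | succ k => rw [coeff_X_mul, ih, ih, esymmOn_insert_succ ha]

open Polynomial in
lemma esymmOn_newton {n : ℕ} (A : Finset (Fin n)) (x : Fin n → ℝ) (k : ℕ) :
    esymmOn A ((k + 2 : ℕ) : ℤ) x * esymmOn A (k : ℤ) x
      ≤ esymmOn A ((k + 1 : ℕ) : ℤ) x ^ 2 := by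
  have hs : (∏ i ∈ A, (1 + C (x i) * X)).Splits := by
    refine Splits.prod fun i _ => Splits.of_natDegree_le_one ?_
    compute_degree
  have h := coeff_newton_of_splits k hs
  simp only [coeff_prod_eq_esymmOn] at h
  have hk : (0 : ℝ) < (k : ℝ) + 2 := by positivity
  refine le_of_mul_le_mul_left ?_ hk
  nlinarith [sq_nonneg (esymmOn A ((k + 1 : ℕ) : ℤ) x)]

/-- The identity (4.22) and the Newton inequality. -/
theorem newton_identity (n m : ℕ) (hn : 2 ≤ n) (hm2 : 2 ≤ m) (hmn : m ≤ n)
    (κ : Fin n → ℝ) (a b : Fin n) (hab : a ≠ b) :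
    esymD1 ((m : ℤ) - 1) κ a * esymD1 ((m : ℤ) - 1) κ b
        - esym (m : ℤ) κ * esymD2 ((m : ℤ) - 2) κ a b
      = esymD2 ((m : ℤ) - 1) κ a b ^ 2
        - esymD2 (m : ℤ) κ a b * esymD2 ((m : ℤ) - 2) κ a b ∧
    0 ≤ esymD2 ((m : ℤ) - 1) κ a b ^ 2
        - esymD2 (m : ℤ) κ a b * esymD2 ((m : ℤ) - 2) κ a b := by
  obtain ⟨k, rfl⟩ := Nat.exists_eq_add_of_le' hm2
  have e1 : ((k + 2 : ℕ) : ℤ) - 1 = ((k + 1 : ℕ) : ℤ) := by push_cast; ring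
  have e2 : ((k + 2 : ℕ) : ℤ) - 2 = (k : ℤ) := by push_cast; ring
  simp only [e1, e2, esym, esymD1, esymD2]
  set A := (Finset.univ.erase a).erase b with hA
  have hbA : b ∉ A := by simp [hA]
  have haA : a ∉ A := by simp [hA]
  have hUa : Finset.univ.erase a = insert b A := by
    rw [hA, Finset.insert_erase]; simp [hab.symm]
  have hUb : Finset.univ.erase b = insert a A := by
    rw [hA, Finset.erase_right_comm, Finset.insert_erase]; simp [hab]
  have hU : (Finset.univ : Finset (Fin n)) = insert a (insert b A) := by
    rw [← hUa, Finset.insert_erase (Finset.mem_univ a)]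
  have haB : a ∉ insert b A := by simp [hab, haA]
  refine ⟨?_, sub_nonneg.2 (esymmOn_newton A κ k)⟩
  rw [hUa, hUb, hU, esymmOn_insert_succ haB (k + 1), esymmOn_insert_succ hbA (k + 1),
    esymmOn_insert_succ hbA k, esymmOn_insert_succ haA k]
  ring
end
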